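/- arXiv:2605.14286 — 6 statements merged into one kernel-verified Lean document; each statement's English description precedes it below -/
import Mathlib

section
/- Let M be a finitely generated 𝔖-module such that for every integer j ≥ 0 the quotient gr_p^j M = p^j M / p^{j+1} M is a finite free module over 𝔖/(p) ≅ k[[z]]. Then there exist integers m, n ≥ 0 and integers a_1, …, a_n ≥ 1 such that M is isomorphic as an 𝔖-module to 𝔖^{⊕m} ⊕ ⊕_{i=1}^{n} 𝔖/(p^{a_i}). -/
/-!
Context: `p` a prime, `k` a perfect field of characteristic `p`, `W(k)` the ring of
`p`-typical Witt vectors, and `𝕊 = W(k)[[z]]`.  For an `𝕊`-module `M` and `j ≥ 0` we write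
`gr_p^j M := p^j M / p^{j+1} M`, a module over `𝕊/(p) ≅ k[[z]]`.

STATEMENT 0: if `M` is a finitely generated `𝕊`-module such that every `gr_p^j M` is a
finite free `𝕊/(p)`-module, then `M ≅ 𝕊^m ⊕ ⨁_{i=1}^n 𝕊/(p^{a_i})` with `a_i ≥ 1`.
(Finite freeness of `gr_p^j M` over `𝕊/(p)` is expressed by the existence of an
`𝕊`-linear isomorphism with `(𝕊/(p))^r` for some `r`.)
-/

variable {p : ℕ} [Fact p.Prime] {k : Type*} [Field k] [CharP k p] [PerfectField k]

local notation "𝕊" => PowerSeries (WittVector p k)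

/-!
Put `V = M/πM`, where `π = p`, and let `K_j` be the kernel of the surjection
`π^j : V → gr_π^j M`. The `K_j` form an increasing chain with torsion-free quotients
`V/K_j ≅ gr_π^j M`, so over the principal ideal domain `R/π` there is a basis of `V` such that
every `K_j` is spanned by the basis vectors it contains. A basis vector that first appears in
`K_a` lifts to an element of `M` killed by `π^a`; a vector lying in no `K_j` is lifted
arbitrarily. These lifts define a map to `M` from a direct sum of copies of `R` and of
`R/(π^a)`. It is surjective by Nakayama's lemma. It is injective on each graded piece by the choice
of the basis, hence injective because the source is `π`-adically separated.
-/

section AdaptedBasis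

variable {D V : Type*} [CommRing D] [IsDomain D] [IsPrincipalIdealRing D]
  [AddCommGroup V] [Module D V] [Module.Finite D V] [Module.IsTorsionFree D V]

theorem exists_basis_adapted_of_lt (K : ℕ → Submodule D V) (hmono : Monotone K)
    (htf : ∀ j, Module.IsTorsionFree D (V ⧸ K j)) (N : ℕ) :
    ∃ (d : ℕ) (b : Module.Basis (Fin d) D V),
      ∀ j < N, K j ≤ Submodule.span D (Set.range b ∩ K j) := by
  induction N generalizing V with
  | zero => exact ⟨_, Module.finBasis D V, fun j hj => absurd hj j.not_lt_zero⟩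
  | succ N ih =>
    have htf_comap (j : ℕ) :
        Module.IsTorsionFree D (K N ⧸ (K j).comap (K N).subtype) := by
      refine Function.Injective.moduleIsTorsionFree
        (Submodule.mapQ _ (K j) (K N).subtype le_rfl) ?_ (by simp)
      rw [← LinearMap.ker_eq_bot, Submodule.ker_mapQ, Submodule.mkQ_map_self]
    obtain ⟨d, b, hb⟩ := ih (fun j => (K j).comap (K N).subtype)
      (fun i j hij => Submodule.comap_mono (hmono hij)) htf_comap
    let b' := Module.Basis.sumQuot b (Module.finBasis D (V ⧸ K N))
    refine ⟨_, b'.reindex finSumFinEquiv, fun j hj => ?_⟩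
    have hjN : K j ≤ K N := hmono (Nat.le_of_lt_succ hj)
    have hb' : (K N).subtype '' (Set.range b ∩ (K j).comap (K N).subtype) ⊆
        Set.range (b'.reindex finSumFinEquiv) ∩ K j := by
      rintro _ ⟨_, ⟨⟨i, rfl⟩, hi⟩, rfl⟩
      refine ⟨?_, hi⟩
      rw [Module.Basis.range_reindex]
      exact ⟨Sum.inl i, Module.Basis.sumQuot_inl _ _ i⟩
    have hbj : (K j).comap (K N).subtype ≤
        Submodule.span D (Set.range b ∩ (K j).comap (K N).subtype) := by
      rcases Nat.lt_succ_iff_lt_or_eq.1 hj with hlt | rfl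
      · exact hb j hlt
      · simp [b.span_eq]
    calc K j = ((K j).comap (K N).subtype).map (K N).subtype := by
          rw [Submodule.map_comap_subtype, inf_eq_right.2 hjN]
      _ ≤ (Submodule.span D (Set.range b ∩ (K j).comap (K N).subtype)).map (K N).subtype :=
          Submodule.map_mono hbj
      _ ≤ Submodule.span D (Set.range (b'.reindex finSumFinEquiv) ∩ K j) := by
          rw [Submodule.map_span]
          exact Submodule.span_mono hb'

theorem exists_basis_adapted (K : ℕ → Submodule D V) (hmono : Monotone K)
    (htf : ∀ j, Module.IsTorsionFree D (V ⧸ K j)) :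
    ∃ (d : ℕ) (b : Module.Basis (Fin d) D V),
      ∀ j, K j ≤ Submodule.span D (Set.range b ∩ K j) := by
  obtain ⟨N, hN⟩ := monotone_stabilizes_iff_noetherian.2
    (inferInstance : IsNoetherian D V) ⟨K, hmono⟩
  obtain ⟨d, b, hb⟩ := exists_basis_adapted_of_lt K hmono htf (N + 1)
  refine ⟨d, b, fun j => ?_⟩
  rcases le_total j N with hj | hj
  · exact hb j (Nat.lt_succ_of_le hj)
  · have hKj : K N = K j := hN j hj
    exact hKj ▸ hb N N.lt_succ_self

theorem exists_basis_sum_with_levels (K : ℕ → Submodule D V) (hmono : Monotone K)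
    (htf : ∀ j, Module.IsTorsionFree D (V ⧸ K j)) :
    ∃ (m n : ℕ) (b : Module.Basis (Fin m ⊕ Fin n) D V) (a : Fin n → ℕ),
      (∀ i, b (Sum.inr i) ∈ K (a i)) ∧
        ∀ j, K j ≤ Submodule.span D (b '' (Sum.inr '' {i | a i ≤ j})) := by
  classical
  obtain ⟨d, b, hb⟩ := exists_basis_adapted K hmono htf
  let e : Fin d ≃ _ := (Equiv.sumCompl fun i => ∃ j, b i ∈ K j).symm.trans <|
    (Equiv.sumComm _ _).trans <| (Fintype.equivFin _).sumCongr (Fintype.equivFin _)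
  have hlevel (i) : ∃ j, b (e.symm (Sum.inr i)) ∈ K j := by
    simpa [e] using ((Fintype.equivFin {i // ∃ j, b i ∈ K j}).symm i).2
  refine ⟨_, _, b.reindex e, fun i => Nat.find (hlevel i), fun i => ?_, fun j => ?_⟩
  · simpa using Nat.find_spec (hlevel i)
  · refine (hb j).trans (Submodule.span_mono ?_)
    rintro _ ⟨⟨i, rfl⟩, hi⟩
    obtain ⟨i, rfl⟩ := e.symm.surjective i
    rcases i with i | i
    · have := ((Fintype.equivFin {i // ¬ ∃ j, b i ∈ K j}).symm i).2
      exact absurd ⟨j, by simpa [e] using hi⟩ this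
    · exact ⟨Sum.inr i, ⟨i, Nat.find_min' (hlevel i) hi, rfl⟩, by simp⟩

end AdaptedBasis

section Hausdorff

variable {R : Type*} [CommRing R] {I : Ideal R}
  {M N : Type*} [AddCommGroup M] [Module R M] [AddCommGroup N] [Module R N]

theorem map_eq_zero_of_forall_smodEq_zero [IsHausdorff I N] (f : M →ₗ[R] N) {x : M}
    (hx : ∀ n : ℕ, x ≡ 0 [SMOD (I ^ n • ⊤ : Submodule R M)]) : f x = 0 :=
  IsHausdorff.haus ‹_› _ fun n => by
    have hmap := (hx n).map f
    rw [map_zero, Submodule.map_smul''] at hmap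
    exact hmap.mono (Submodule.smul_mono le_rfl le_top)

instance isHausdorff_prod [IsHausdorff I M] [IsHausdorff I N] : IsHausdorff I (M × N) :=
  ⟨fun _ hx => Prod.ext (map_eq_zero_of_forall_smodEq_zero (LinearMap.fst R M N) hx)
    (map_eq_zero_of_forall_smodEq_zero (LinearMap.snd R M N) hx)⟩

instance isHausdorff_pi {ι : Type*} (P : ι → Type*) [∀ i, AddCommGroup (P i)]
    [∀ i, Module R (P i)] [∀ i, IsHausdorff I (P i)] : IsHausdorff I (∀ i, P i) :=
  ⟨fun _ hx => funext fun i => map_eq_zero_of_forall_smodEq_zero (LinearMap.proj i) hx⟩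

theorem isHausdorff_quotient_pow (n : ℕ) : IsHausdorff I (R ⧸ I ^ n) := by
  refine ⟨fun x hx => ?_⟩
  have hbot : (I ^ n • ⊤ : Submodule R (R ⧸ I ^ n)) = ⊥ := by
    rw [← Submodule.range_mkQ, ← Submodule.map_top, ← Submodule.map_smul'', smul_eq_mul,
      Ideal.mul_top, Submodule.mkQ_map_self]
  simpa [hbot] using hx n

end Hausdorff

section GradedPieces

variable {R : Type*} [CommRing R] (π : R) {M F : Type*} [AddCommGroup M] [Module R M]
  [AddCommGroup F] [Module R F]

theorem mem_span_singleton_smul_top {s : R} {x : M} :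
    x ∈ Ideal.span {s} • (⊤ : Submodule R M) ↔ ∃ y, s • y = x := by
  simp [Submodule.ideal_span_singleton_smul, Submodule.mem_smul_pointwise_iff_exists]

variable (M) in
/-- The graded piece `gr_π^j M = π^j M / π^{j+1} M` of the `π`-adic filtration, as an
`R`-module. -/
abbrev AdicGr (j : ℕ) : Type _ :=
  ↥(Ideal.span {π ^ j} • (⊤ : Submodule R M)) ⧸
    (Ideal.span {π ^ (j + 1)} • (⊤ : Submodule R M)).comap
      (Ideal.span {π ^ j} • (⊤ : Submodule R M)).subtype

variable (M) in
/-- The kernel of the surjection `M/πM → gr_π^j M` induced by multiplication by `π^j`. -/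
def grKernel (j : ℕ) :
    Submodule (R ⧸ Ideal.span {π}) (M ⧸ Ideal.span {π} • (⊤ : Submodule R M)) where
  __ := ((Ideal.span {π ^ (j + 1)} • (⊤ : Submodule R M)).comap
    (LinearMap.lsmul R M (π ^ j))).map (Submodule.mkQ _)
  smul_mem' c v hv := by
    obtain ⟨r, rfl⟩ := Ideal.Quotient.mk_surjective c
    exact Submodule.smul_mem _ r hv

variable {π}

theorem mk_mem_grKernel {j : ℕ} {x : M} :
    Submodule.Quotient.mk x ∈ grKernel π M j ↔
      π ^ j • x ∈ Ideal.span {π ^ (j + 1)} • (⊤ : Submodule R M) := by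
  have hle : Ideal.span {π} • (⊤ : Submodule R M) ≤
      (Ideal.span {π ^ (j + 1)} • (⊤ : Submodule R M)).comap (LinearMap.lsmul R M (π ^ j)) := by
    intro y hy
    obtain ⟨z, rfl⟩ := mem_span_singleton_smul_top.1 hy
    exact mem_span_singleton_smul_top.2 ⟨z, by rw [LinearMap.lsmul_apply, smul_smul, ← pow_succ]⟩
  change x ∈ (((Ideal.span {π ^ (j + 1)} • (⊤ : Submodule R M)).comap
    (LinearMap.lsmul R M (π ^ j))).map (Submodule.mkQ _)).comap (Submodule.mkQ _) ↔ _
  rw [Submodule.comap_map_mkQ, sup_eq_right.2 hle]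
  rfl

theorem grKernel_monotone : Monotone (grKernel π M) := by
  refine monotone_nat_of_le_succ fun j v hv => ?_
  obtain ⟨x, rfl⟩ := Submodule.Quotient.mk_surjective _ v
  obtain ⟨y, hy⟩ := mem_span_singleton_smul_top.1 (mk_mem_grKernel.1 hv)
  refine mk_mem_grKernel.2 (mem_span_singleton_smul_top.2 ⟨y, ?_⟩)
  rw [pow_succ' π j, mul_smul, ← hy, smul_smul, ← pow_succ']

theorem grKernel_zero : grKernel π M 0 = ⊥ := by
  refine eq_bot_iff.2 fun v hv => ?_
  obtain ⟨x, rfl⟩ := Submodule.Quotient.mk_surjective _ v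
  simpa [mk_mem_grKernel] using hv

theorem exists_lift_of_mem_grKernel {j : ℕ} {v : M ⧸ Ideal.span {π} • (⊤ : Submodule R M)}
    (hv : v ∈ grKernel π M j) : ∃ x, Submodule.Quotient.mk x = v ∧ π ^ j • x = 0 := by
  obtain ⟨x, rfl⟩ := Submodule.Quotient.mk_surjective _ v
  obtain ⟨y, hy⟩ := mem_span_singleton_smul_top.1 (mk_mem_grKernel.1 hv)
  refine ⟨x - π • y, ?_, by rw [smul_sub, smul_smul, ← pow_succ, hy, sub_self]⟩
  rw [Submodule.Quotient.eq, sub_sub_cancel_left]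
  exact neg_mem (mem_span_singleton_smul_top.2 ⟨y, rfl⟩)

theorem isTorsionFree_quotient_grKernel [IsDomain (R ⧸ Ideal.span {π})] {j : ℕ}
    (hgr : ∀ (r : R) (y : AdicGr π M j), r • y = 0 → r ∈ Ideal.span {π} ∨ y = 0) :
    Module.IsTorsionFree (R ⧸ Ideal.span {π})
      ((M ⧸ Ideal.span {π} • (⊤ : Submodule R M)) ⧸ grKernel π M j) := by
  refine .of_smul_eq_zero fun c v hcv => ?_
  obtain ⟨r, rfl⟩ := Ideal.Quotient.mk_surjective c
  obtain ⟨v, rfl⟩ := Submodule.Quotient.mk_surjective _ v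
  obtain ⟨x, rfl⟩ := Submodule.Quotient.mk_surjective _ v
  have hrx : π ^ j • r • x ∈ Ideal.span {π ^ (j + 1)} • (⊤ : Submodule R M) :=
    mk_mem_grKernel.1 ((Submodule.Quotient.mk_eq_zero _).1 hcv)
  let y : ↥(Ideal.span {π ^ j} • (⊤ : Submodule R M)) :=
    ⟨π ^ j • x, mem_span_singleton_smul_top.2 ⟨x, rfl⟩⟩
  refine (hgr r (Submodule.Quotient.mk y) ?_).imp Ideal.Quotient.eq_zero_iff_mem.2 fun hy => ?_
  · rw [← Submodule.Quotient.mk_smul, Submodule.Quotient.mk_eq_zero]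
    simpa [y, smul_comm r] using hrx
  · rw [Submodule.Quotient.mk_eq_zero, mk_mem_grKernel]
    exact (Submodule.Quotient.mk_eq_zero (Submodule.comap _ _)).1 hy

theorem isTorsionFree_quotient_span_smul_top [IsDomain (R ⧸ Ideal.span {π})]
    (hgr : ∀ (r : R) (y : AdicGr π M 0), r • y = 0 → r ∈ Ideal.span {π} ∨ y = 0) :
    Module.IsTorsionFree (R ⧸ Ideal.span {π}) (M ⧸ Ideal.span {π} • (⊤ : Submodule R M)) :=
  have := isTorsionFree_quotient_grKernel hgr
  let e := Submodule.quotEquivOfEqBot _ (grKernel_zero (π := π) (M := M))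
  e.symm.injective.moduleIsTorsionFree _ fun c v => map_smul e.symm c v

theorem injective_of_forall_mem_grKernel [IsHausdorff (Ideal.span {π}) F] (f : F →ₗ[R] M)
    (hf : ∀ (j : ℕ) (w : F), Submodule.Quotient.mk (f w) ∈ grKernel π M j →
      Submodule.Quotient.mk w ∈ grKernel π F j) : Function.Injective f := by
  refine (injective_iff_map_eq_zero f).2 fun w hw => ?_
  have hdiv (j : ℕ) : w ∈ Ideal.span {π ^ j} • (⊤ : Submodule R F) := by
    induction j with
    | zero => simp
    | succ j ih =>
      obtain ⟨w', rfl⟩ := mem_span_singleton_smul_top.1 ih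
      refine mk_mem_grKernel.1 (hf j w' (mk_mem_grKernel.2 ?_))
      rw [← map_smul, hw]
      exact zero_mem _
  refine IsHausdorff.haus ‹_› w fun j => ?_
  rw [SModEq.zero, Ideal.span_singleton_pow]
  exact hdiv j

end GradedPieces

section CyclicSum

theorem exists_eq_mk_quotient {α : Type*} {R : Type*} [CommRing R] {κ : Type*} {I : κ → Ideal R}
    (w : α × ((i : κ) → R ⧸ I i)) :
    ∃ (u : α) (c : κ → R), w = (u, fun i => Ideal.Quotient.mk (I i) (c i)) := by
  choose c hc using fun i => Ideal.Quotient.mk_surjective (w.2 i)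
  exact ⟨w.1, c, Prod.ext rfl (funext fun i => (hc i).symm)⟩

variable {R : Type*} [CommRing R] {π : R} {M : Type*} [AddCommGroup M] [Module R M]
  {ι κ : Type*} [Fintype ι] [Fintype κ] [DecidableEq κ]
  {a : κ → ℕ} {x : ι → M} {y : κ → M}

/-- The linear map `R^ι ⊕ ⨁ R/(π^{a_i}) → M` sending the standard generators to `x` and `y`; its
bijectivity is the decomposition of `M` into cyclic modules. -/
noncomputable def cyclicSumHom (x : ι → M) (y : κ → M) (hy : ∀ i, π ^ a i • y i = 0) :
    ((ι → R) × ((i : κ) → R ⧸ Ideal.span {π ^ a i})) →ₗ[R] M :=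
  (Fintype.linearCombination R x).coprod <| LinearMap.lsum R _ R fun i =>
    Submodule.liftQSpanSingleton (π ^ a i) (LinearMap.toSpanSingleton R M (y i)) (hy i)

theorem cyclicSumHom_mk (hy : ∀ i, π ^ a i • y i = 0) (u : ι → R) (c : κ → R) :
    cyclicSumHom x y hy (u, fun i => Ideal.Quotient.mk _ (c i)) =
      ∑ i, u i • x i + ∑ i, c i • y i := by
  simp only [cyclicSumHom, LinearMap.coprod_apply, Fintype.linearCombination_apply,
    LinearMap.lsum_apply, LinearMap.sum_apply]
  rfl

variable (b : Module.Basis (ι ⊕ κ) (R ⧸ Ideal.span {π})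
    (M ⧸ Ideal.span {π} • (⊤ : Submodule R M)))
  (hxy : ∀ i, Submodule.Quotient.mk (Sum.elim x y i) = b i) (hy : ∀ i, π ^ a i • y i = 0)

include hxy

theorem mk_cyclicSumHom (u : ι → R) (c : κ → R) :
    Submodule.Quotient.mk (cyclicSumHom x y hy (u, fun i => Ideal.Quotient.mk _ (c i))) =
      ∑ i, Ideal.Quotient.mk (Ideal.span {π}) (Sum.elim u c i) • b i := by
  have hsum : cyclicSumHom x y hy (u, fun i => Ideal.Quotient.mk _ (c i)) =
      ∑ i, Sum.elim u c i • Sum.elim x y i := by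
    simp only [cyclicSumHom_mk, Fintype.sum_sum_type, Sum.elim_inl, Sum.elim_inr]
  rw [hsum, ← Submodule.mkQ_apply]
  simp only [map_sum, map_smul, Submodule.mkQ_apply, hxy]
  rfl

theorem cyclicSumHom_surjective [Module.Finite R M] (hjac : Ideal.span {π} ≤ Ideal.jacobson ⊥) :
    Function.Surjective (cyclicSumHom x y hy) := by
  refine LinearMap.surjective_of_surjective_comp_mkQ _ _ hjac fun v => ?_
  choose c hc using fun i => Ideal.Quotient.mk_surjective (b.repr v i)
  refine ⟨(c ∘ Sum.inl, fun i => Ideal.Quotient.mk _ ((c ∘ Sum.inr) i)), ?_⟩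
  rw [LinearMap.comp_apply, Submodule.mkQ_apply, mk_cyclicSumHom b hxy hy,
    Sum.elim_comp_inl_inr]
  simp only [hc, b.sum_repr]

theorem mk_mem_grKernel_of_mk_cyclicSumHom_mem_grKernel {j : ℕ}
    (hb : grKernel π M j ≤
      Submodule.span (R ⧸ Ideal.span {π}) (b '' (Sum.inr '' {i | a i ≤ j})))
    {w : (ι → R) × ((i : κ) → R ⧸ Ideal.span {π ^ a i})}
    (hw : Submodule.Quotient.mk (cyclicSumHom x y hy w) ∈ grKernel π M j) :
    Submodule.Quotient.mk w ∈ grKernel π _ j := by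
  obtain ⟨u, c, rfl⟩ := exists_eq_mk_quotient w
  have hdvd (s) (hs : s ∉ Sum.inr '' {i | a i ≤ j}) : π ∣ Sum.elim u c s := by
    have hsupp := b.mem_span_image.1 (hb hw)
    have hrepr := Finsupp.notMem_support_iff.1 fun h => hs (hsupp h)
    rwa [mk_cyclicSumHom b hxy hy, b.repr_sum_self, Ideal.Quotient.eq_zero_iff_mem,
      Ideal.mem_span_singleton] at hrepr
  have hu (i : ι) : ∃ u', π ^ (j + 1) • u' = π ^ j • u i := by
    obtain ⟨u', hu'⟩ := hdvd (Sum.inl i) (by simp)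
    exact ⟨u', by rw [← Sum.elim_inl u c i, hu', pow_succ, mul_smul, smul_eq_mul π]⟩
  have hc (i : κ) : ∃ c', π ^ (j + 1) • c' =
      π ^ j • Ideal.Quotient.mk (Ideal.span {π ^ a i}) (c i) := by
    by_cases hij : a i ≤ j
    · refine ⟨0, ?_⟩
      have hdvd_pow : π ^ a i ∣ π ^ j * c i := (pow_dvd_pow π hij).mul_right _
      rw [smul_zero, eq_comm]
      exact Ideal.Quotient.eq_zero_iff_mem.2 (Ideal.mem_span_singleton.2 hdvd_pow)
    · obtain ⟨c', hc'⟩ := hdvd (Sum.inr i) (by simpa using hij)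
      refine ⟨Ideal.Quotient.mk _ c', ?_⟩
      rw [← Sum.elim_inr u c i, hc', pow_succ, mul_smul]
      rfl
  choose u' hu' using hu
  choose c' hc' using hc
  exact mk_mem_grKernel.2 (mem_span_singleton_smul_top.2
    ⟨(u', c'), Prod.ext (funext hu') (funext hc')⟩)

theorem cyclicSumHom_injective [IsHausdorff (Ideal.span {π}) R]
    (hb : ∀ j, grKernel π M j ≤
      Submodule.span (R ⧸ Ideal.span {π}) (b '' (Sum.inr '' {i | a i ≤ j}))) :
    Function.Injective (cyclicSumHom x y hy) := by
  have (i : κ) : IsHausdorff (Ideal.span {π}) (R ⧸ Ideal.span {π ^ a i}) :=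
    Ideal.span_singleton_pow π (a i) ▸ isHausdorff_quotient_pow (a i)
  exact injective_of_forall_mem_grKernel _ fun j _ =>
    mk_mem_grKernel_of_mk_cyclicSumHom_mem_grKernel b hxy hy (hb j)

end CyclicSum

section Classification

variable {R : Type*} [CommRing R] {π : R}

theorem mem_or_eq_zero_of_smul_eq_zero {N ι : Type*} [AddCommGroup N] [Module R N] {I : Ideal R}
    [IsDomain (R ⧸ I)] (e : N ≃ₗ[R] (ι → R ⧸ I)) (r : R) (y : N) (hry : r • y = 0) :
    r ∈ I ∨ y = 0 := by
  refine or_iff_not_imp_left.2 fun hr => e.map_eq_zero_iff.1 (funext fun i => ?_)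
  have hmul : Ideal.Quotient.mk I r * e y i = 0 := by
    rw [← Ideal.Quotient.algebraMap_eq, ← Algebra.smul_def, ← Pi.smul_apply, ← map_smul, hry,
      map_zero, Pi.zero_apply]
  exact (mul_eq_zero.1 hmul).resolve_left (hr ∘ Ideal.Quotient.eq_zero_iff_mem.1)

theorem pelem_crit_general [IsDomain (R ⧸ Ideal.span {π})]
    [IsPrincipalIdealRing (R ⧸ Ideal.span {π})] [IsHausdorff (Ideal.span {π}) R]
    (hjac : Ideal.span {π} ≤ Ideal.jacobson ⊥)
    (M : Type*) [AddCommGroup M] [Module R M] [Module.Finite R M]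
    (hgr : ∀ (j : ℕ) (r : R) (y : AdicGr π M j), r • y = 0 → r ∈ Ideal.span {π} ∨ y = 0) :
    ∃ (m n : ℕ) (a : Fin n → ℕ), (∀ i, 1 ≤ a i) ∧
      Nonempty (M ≃ₗ[R] ((Fin m → R) × ((i : Fin n) → R ⧸ Ideal.span {π ^ a i}))) := by
  have := isTorsionFree_quotient_span_smul_top (hgr 0)
  have : Module.Finite (R ⧸ Ideal.span {π}) (M ⧸ Ideal.span {π} • (⊤ : Submodule R M)) :=
    .of_restrictScalars_finite R _ _
  obtain ⟨m, n, b, a, hba, hb⟩ := exists_basis_sum_with_levels (grKernel π M) grKernel_monotone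
    fun j => isTorsionFree_quotient_grKernel (hgr j)
  choose x hx using fun i => Submodule.Quotient.mk_surjective _ (b (Sum.inl i))
  choose y hyb hy using fun i => exists_lift_of_mem_grKernel (hba i)
  have hxy : ∀ i, Submodule.Quotient.mk (Sum.elim x y i) = b i := Sum.rec hx hyb
  refine ⟨m, n, a, fun i => Nat.one_le_iff_ne_zero.2 fun hi => b.ne_zero (Sum.inr i) ?_,
    ⟨(LinearEquiv.ofBijective (cyclicSumHom x y hy) ⟨?_, ?_⟩).symm⟩⟩
  · rw [← Submodule.mem_bot (R ⧸ Ideal.span {π}), ← grKernel_zero, ← hi]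
    exact hba i
  · exact cyclicSumHom_injective b hxy hy hb
  · exact cyclicSumHom_surjective b hxy hy hjac

end Classification

section PowerSeries

variable {A B : Type*} [CommRing A] [CommRing B]

theorem powerSeries_C_dvd_iff {a : A} {f : PowerSeries A} :
    PowerSeries.C a ∣ f ↔ ∀ n, a ∣ PowerSeries.coeff n f := by
  refine ⟨?_, fun h => ?_⟩
  · rintro ⟨g, rfl⟩ n
    exact ⟨_, PowerSeries.coeff_C_mul n g a⟩
  · choose g hg using h
    exact ⟨PowerSeries.mk g, by ext n; simp [hg]⟩

theorem ker_powerSeries_map {φ : A →+* B} {a : A} (hφ : RingHom.ker φ = Ideal.span {a}) :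
    RingHom.ker (PowerSeries.map φ) = Ideal.span {PowerSeries.C a} := by
  have hφ_dvd (x : A) : φ x = 0 ↔ a ∣ x := by
    rw [← RingHom.mem_ker, hφ, Ideal.mem_span_singleton]
  ext f
  simp only [RingHom.mem_ker, PowerSeries.ext_iff, PowerSeries.coeff_map, map_zero,
    Ideal.mem_span_singleton, powerSeries_C_dvd_iff, hφ_dvd]

theorem isHausdorff_powerSeries (I : Ideal A) [IsHausdorff I A] :
    IsHausdorff (I.map PowerSeries.C) (PowerSeries A) := by
  rw [← PowerSeries.algebraMap_eq, IsHausdorff.map_algebraMap_iff]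
  exact ⟨fun f hf => PowerSeries.ext fun n =>
    map_eq_zero_of_forall_smodEq_zero (PowerSeries.coeff n) hf⟩

theorem map_C_le_jacobson {I : Ideal A} (hI : I ≤ Ideal.jacobson ⊥) :
    I.map (PowerSeries.C (R := A)) ≤ Ideal.jacobson ⊥ := by
  refine Ideal.map_le_iff_le_comap.2 fun a ha => Ideal.mem_jacobson_bot.2 fun f => ?_
  rw [PowerSeries.isUnit_iff_constantCoeff]
  simpa using Ideal.mem_jacobson_bot.1 (hI ha) (PowerSeries.constantCoeff f)

variable (A) in
theorem map_C_span_natCast (n : ℕ) :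
    (Ideal.span {(n : A)}).map PowerSeries.C = Ideal.span {(n : PowerSeries A)} := by
  rw [Ideal.map_span, Set.image_singleton, map_natCast]

end PowerSeries

section WittVector

variable (p k) in
/-- The isomorphism `W(k)[[z]]/(p) ≅ k[[z]]` reducing the coefficients modulo `p`. -/
noncomputable def quotientSpanNatCastEquiv : 𝕊 ⧸ Ideal.span {(p : 𝕊)} ≃+* PowerSeries k :=
  (Ideal.quotEquivOfEq (by
    rw [ker_powerSeries_map WittVector.ker_constantCoeff, map_natCast])).trans <|
  RingHom.quotientKerEquivOfSurjective <|
    PowerSeries.map_surjective _ (WittVector.constantCoeff_surjective p)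

instance isDomain_quotient_span_natCast : IsDomain (𝕊 ⧸ Ideal.span {(p : 𝕊)}) :=
  (quotientSpanNatCastEquiv p k).toMulEquiv.isDomain _

instance isPrincipalIdealRing_quotient_span_natCast :
    IsPrincipalIdealRing (𝕊 ⧸ Ideal.span {(p : 𝕊)}) :=
  .of_surjective (quotientSpanNatCastEquiv p k).symm (RingEquiv.surjective _)

instance isHausdorff_span_natCast : IsHausdorff (Ideal.span {(p : 𝕊)}) 𝕊 :=
  map_C_span_natCast (WittVector p k) p ▸ isHausdorff_powerSeries _

variable (p k) in
theorem span_natCast_le_jacobson : Ideal.span {(p : 𝕊)} ≤ Ideal.jacobson ⊥ :=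
  map_C_span_natCast (WittVector p k) p ▸ map_C_le_jacobson (IsAdicComplete.le_jacobson_bot _)

end WittVector

theorem pelem_crit
    (M : Type*) [AddCommGroup M] [Module 𝕊 M] [Module.Finite 𝕊 M]
    (hfree : ∀ j : ℕ, ∃ r : ℕ, Nonempty
      ((↥(Ideal.span {(p : 𝕊) ^ j} • (⊤ : Submodule 𝕊 M)) ⧸
          (Ideal.span {(p : 𝕊) ^ (j + 1)} • (⊤ : Submodule 𝕊 M)).comap
            (Ideal.span {(p : 𝕊) ^ j} • (⊤ : Submodule 𝕊 M)).subtype)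
        ≃ₗ[𝕊] (Fin r → 𝕊 ⧸ Ideal.span {(p : 𝕊)}))) :
    ∃ (m n : ℕ) (a : Fin n → ℕ), (∀ i, 1 ≤ a i) ∧
      Nonempty (M ≃ₗ[𝕊]
        ((Fin m → 𝕊) × ((i : Fin n) → 𝕊 ⧸ Ideal.span {(p : 𝕊) ^ a i}))) :=
  pelem_crit_general (span_natCast_le_jacobson p k) M fun j =>
    let ⟨_, ⟨e⟩⟩ := hfree j
    mem_or_eq_zero_of_smul_eq_zero e
end

section
/- Let T be a finitely generated 𝔖-module killed by p^N for some integer N ≥ 1, and suppose that for every integer j ≥ 0 the quotient gr_p^j T = p^j T / p^{j+1} T is a finite free module over 𝔖/(p) ≅ k[[z]]. Then there exist integers t ≥ 0 and a_1, …, a_t ≥ 1 such that T is isomorphic as an 𝔖-module to ⊕_{i=1}^{t} 𝔖/(p^{a_i}). -/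
/-!
Context: `p` a prime, `k` a perfect field of characteristic `p`, `W(k)` the Witt vectors,
`𝕊 = W(k)[[z]]`, and `gr_p^j T := p^j T / p^{j+1} T`, a module over `𝕊/(p) ≅ k[[z]]`.

STATEMENT 1: if `T` is a finitely generated `𝕊`-module killed by `p^N` for some `N ≥ 1`,
and every `gr_p^j T` is finite free over `𝕊/(p)`, then `T ≅ ⨁_{i=1}^t 𝕊/(p^{a_i})` with
`a_i ≥ 1`.
-/

variable {p : ℕ} [Fact p.Prime] {k : Type*} [Field k] [CharP k p] [PerfectField k]

local notation "𝕊" => PowerSeries (WittVector p k)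

/-!
Multiplication by `π` maps `M = π ^ j T` onto `M' = π ^ (j + 1) T` with kernel `M[π]`, so the image
`K` of `M[π]` in `M / π M` is the kernel of the induced surjection `M / π M → M' / π M'`. Both
quotients are finite free over the local ring `R / (π)`, hence this surjection splits and `K` is
free. A decomposition of `M'` into cyclic modules then gives one of `M`: lift its generators along
multiplication by `π`, which raises every exponent by one, and add elements of `M[π]` lifting a
basis of `K`, each of exponent one. Descending induction from `π ^ N T = 0` reaches `T`.

For `R = W(k)[[z]]` and `π = p`, the ring `R / (π)` is local because the residue map `R → k` is a
local homomorphism that kills `p`.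
-/

open scoped Pointwise

section FreeKernel

variable {A P Q : Type*} [CommRing A] [AddCommGroup P] [Module A P] [AddCommGroup Q] [Module A Q]

theorem exists_comp_ker_subtype_eq_id [Module.Projective A Q] (f : P →ₗ[A] Q)
    (hf : Function.Surjective f) :
    ∃ r : P →ₗ[A] LinearMap.ker f, r ∘ₗ (LinearMap.ker f).subtype = LinearMap.id :=
  ((f.exact_subtype_ker_map.split_tfae Subtype.val_injective hf).out 0 1).1
    (Module.projective_lifting_property f LinearMap.id hf)

theorem exists_basis_ker_of_surjective [IsLocalRing A] [Module.Finite A P] [Module.Projective A P]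
    [Module.Projective A Q] (f : P →ₗ[A] Q) (hf : Function.Surjective f) :
    ∃ n : ℕ, Nonempty (Module.Basis (Fin n) A (LinearMap.ker f)) := by
  obtain ⟨r, hr⟩ := exists_comp_ker_subtype_eq_id f hf
  have : Module.Projective A (LinearMap.ker f) := .of_split _ r hr
  have : Module.Finite A (LinearMap.ker f) :=
    .of_surjective r (Function.RightInverse.surjective (LinearMap.congr_fun hr))
  have : Module.Free A (LinearMap.ker f) := Module.free_of_flat_of_isLocalRing
  exact ⟨_, ⟨Module.finBasis A _⟩⟩

end FreeKernel

section TorsionBasis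

variable {R M N ι κ : Type*} [CommRing R] [AddCommGroup M] [Module R M] [AddCommGroup N]
  [Module R N] [Fintype ι] [Fintype κ] {π : R} {a : ι → ℕ} {x : ι → M} {w : κ → M}

/-- The family `x` exhibits `M` as the internal direct sum of the cyclic submodules
`R x i ≅ R / (π ^ a i)`, with all exponents positive. -/
structure IsTorsionBasis (π : R) (a : ι → ℕ) (x : ι → M) : Prop where
  one_le_exponent (i : ι) : 1 ≤ a i
  span_eq_top : Submodule.span R (Set.range x) = ⊤
  sum_smul_eq_zero_iff (c : ι → R) : ∑ i, c i • x i = 0 ↔ ∀ i, π ^ a i ∣ c i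

/-- The family `w` consists of elements of `M[π]` whose classes in `M / π M` form a basis of the
image of `M[π]` over `R / (π)`; the last two fields say this in terms of coefficients in `R`. -/
structure IsTorsionImageBasis (π : R) (w : κ → M) : Prop where
  smul_eq_zero (l : κ) : π • w l = 0
  exists_sub_sum_mem (m : M) : π • m = 0 →
    ∃ d : κ → R, m - ∑ l, d l • w l ∈ π • (⊤ : Submodule R M)
  dvd_of_sum_mem (d : κ → R) : ∑ l, d l • w l ∈ π • (⊤ : Submodule R M) → ∀ l, π ∣ d l

theorem smul_eq_zero_of_dvd {r c : R} {m : M} (hdvd : r ∣ c) (hm : r • m = 0) : c • m = 0 := by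
  obtain ⟨q, rfl⟩ := hdvd
  rw [mul_comm, mul_smul, hm, smul_zero]

namespace IsTorsionBasis

theorem of_subsingleton [Subsingleton M] [IsEmpty ι] : IsTorsionBasis π a x where
  one_le_exponent := isEmptyElim
  span_eq_top := Subsingleton.elim _ _
  sum_smul_eq_zero_iff _ := iff_of_true (Subsingleton.elim _ _) isEmptyElim

theorem reindex (hx : IsTorsionBasis π a x) (e : κ ≃ ι) : IsTorsionBasis π (a ∘ e) (x ∘ e) where
  one_le_exponent l := hx.one_le_exponent (e l)
  span_eq_top := by rw [e.surjective.range_comp, hx.span_eq_top]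
  sum_smul_eq_zero_iff c := by
    have hsum : ∑ l, c l • (x ∘ e) l = ∑ i, c (e.symm i) • x i :=
      Fintype.sum_equiv e _ _ fun l => by simp
    rw [hsum, hx.sum_smul_eq_zero_iff, e.symm.forall_congr_left]
    simp

theorem map (hx : IsTorsionBasis π a x) (e : M ≃ₗ[R] N) : IsTorsionBasis π a (e ∘ x) where
  one_le_exponent := hx.one_le_exponent
  span_eq_top := by
    rw [Set.range_comp, ← LinearEquiv.coe_coe, ← Submodule.map_span, hx.span_eq_top,
      Submodule.map_top, LinearEquiv.range]
  sum_smul_eq_zero_iff c := by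
    rw [← hx.sum_smul_eq_zero_iff, ← e.map_eq_zero_iff, map_sum]
    simp

theorem exists_sum_eq (hx : IsTorsionBasis π a x) (m : M) : ∃ c : ι → R, ∑ i, c i • x i = m :=
  (Submodule.mem_span_range_iff_exists_fun R).1 (hx.span_eq_top ▸ Submodule.mem_top)

theorem pow_smul_eq_zero (hx : IsTorsionBasis π a x) (i : ι) : π ^ a i • x i = 0 := by
  classical
  have hsum := (hx.sum_smul_eq_zero_iff (Pi.single i (π ^ a i))).2 fun j => by
    obtain rfl | hj := eq_or_ne j i <;> simp [*]
  simpa [Pi.single_apply] using hsum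

theorem nonempty_linearEquiv (hx : IsTorsionBasis π a x) :
    Nonempty (M ≃ₗ[R] ((i : ι) → R ⧸ Ideal.span {π ^ a i})) := by
  have hsurj : Function.Surjective (Fintype.linearCombination R x) := hx.exists_sum_eq
  have hker : LinearMap.ker (Fintype.linearCombination R x) =
      Submodule.pi Set.univ fun i => (Ideal.span {π ^ a i} : Submodule R R) := by
    ext c
    simp only [LinearMap.mem_ker, Fintype.linearCombination_apply, hx.sum_smul_eq_zero_iff,
      Submodule.mem_pi, Set.mem_univ, forall_const, Ideal.mem_span_singleton]
  classical
  exact ⟨((Fintype.linearCombination R x).quotKerEquivOfSurjective hsurj).symm ≪≫ₗ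
    Submodule.quotEquivOfEq _ _ hker ≪≫ₗ Submodule.quotientPi _⟩

end IsTorsionBasis

section Lift

variable {f : M →ₗ[R] N}

theorem quotSMulTop_map_mk_eq_zero_iff (hf : Function.Surjective f)
    (hker : ∀ m, f m = 0 ↔ π • m = 0) (m : M) :
    QuotSMulTop.map π f (Submodule.Quotient.mk m) = 0 ↔
      ∃ w : M, π • w = 0 ∧ m - w ∈ π • (⊤ : Submodule R M) := by
  simp only [QuotSMulTop.map_apply_mk, Submodule.Quotient.mk_eq_zero,
    Submodule.mem_smul_pointwise_iff_exists, Submodule.mem_top, true_and]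
  constructor
  · rintro ⟨n, hn⟩
    obtain ⟨m', rfl⟩ := hf n
    refine ⟨m - π • m', (hker _).1 ?_, m', by abel⟩
    rw [map_sub, map_smul, hn, sub_self]
  · rintro ⟨w, hw, m', hm'⟩
    exact ⟨f m', by rw [← map_smul, hm', map_sub, (hker w).2 hw, sub_zero]⟩

theorem exists_isTorsionImageBasis [IsLocalRing (R ⧸ Ideal.span {π})]
    [Module.Free (R ⧸ Ideal.span {π}) (QuotSMulTop π M)]
    [Module.Finite (R ⧸ Ideal.span {π}) (QuotSMulTop π M)]
    [Module.Free (R ⧸ Ideal.span {π}) (QuotSMulTop π N)]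
    (hf : Function.Surjective f) (hker : ∀ m, f m = 0 ↔ π • m = 0) :
    ∃ (n : ℕ) (w : Fin n → M), IsTorsionImageBasis π w := by
  let fbar : QuotSMulTop π M →ₗ[R ⧸ Ideal.span {π}] QuotSMulTop π N :=
    (QuotSMulTop.map π f).extendScalarsOfSurjective Ideal.Quotient.mk_surjective
  have fbar_mk_eq_zero_iff := quotSMulTop_map_mk_eq_zero_iff hf hker
  obtain ⟨n, ⟨b⟩⟩ := exists_basis_ker_of_surjective fbar (QuotSMulTop.map_surjective π hf)
  have hlift (l : Fin n) : ∃ w : M, π • w = 0 ∧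
      (Submodule.Quotient.mk w : QuotSMulTop π M) = b l := by
    obtain ⟨m, hm⟩ := Submodule.Quotient.mk_surjective _ (b l : QuotSMulTop π M)
    obtain ⟨w, hw, hmw⟩ := (fbar_mk_eq_zero_iff m).1 (hm ▸ (b l).2)
    exact ⟨w, hw, ((Submodule.Quotient.eq _).2 hmw).symm.trans hm⟩
  choose w hw hwb using hlift
  have mk_sum (d : Fin n → R) : (Submodule.Quotient.mk (∑ l, d l • w l) : QuotSMulTop π M) =
      ((∑ l, Ideal.Quotient.mk (Ideal.span {π}) (d l) • b l : LinearMap.ker fbar) :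
        QuotSMulTop π M) := by
    rw [← Submodule.mkQ_apply, map_sum, Submodule.coe_sum]
    refine Finset.sum_congr rfl fun l _ => ?_
    rw [map_smul, Submodule.mkQ_apply, hwb]
    rfl
  refine ⟨n, w, hw, fun m hm => ?_, fun d hd l => ?_⟩
  · let v : LinearMap.ker fbar :=
      ⟨Submodule.Quotient.mk m, (fbar_mk_eq_zero_iff m).2 ⟨m, hm, by simp⟩⟩
    choose d hd using fun l => Ideal.Quotient.mk_surjective (b.repr v l)
    refine ⟨d, (Submodule.Quotient.eq _).1 ?_⟩
    rw [mk_sum]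
    simp only [hd, b.sum_repr, v]
  · rw [← Submodule.Quotient.mk_eq_zero, mk_sum, ZeroMemClass.coe_eq_zero] at hd
    have hl := Fintype.linearIndependent_iff.1 b.linearIndependent _ hd l
    rwa [Ideal.Quotient.eq_zero_iff_mem, Ideal.mem_span_singleton] at hl

theorem span_range_sumElim_eq_top {y : ι → M}
    (hker : ∀ m, f m = 0 ↔ π • m = 0) (hy : IsTorsionBasis π a (f ∘ y))
    (hw : IsTorsionImageBasis π w) :
    Submodule.span R (Set.range (Sum.elim y w)) = ⊤ := by
  set S := Submodule.span R (Set.range (Sum.elim y w))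
  have sum_y_mem (c : ι → R) : ∑ i, c i • y i ∈ S :=
    S.sum_mem fun i _ => S.smul_mem _ (Submodule.subset_span ⟨.inl i, rfl⟩)
  have sum_w_mem (d : κ → R) : ∑ l, d l • w l ∈ S :=
    S.sum_mem fun l _ => S.smul_mem _ (Submodule.subset_span ⟨.inr l, rfl⟩)
  have smul_sub_sum_eq_zero (m : M) : ∃ c : ι → R, π • (m - ∑ i, c i • y i) = 0 := by
    obtain ⟨c, hc⟩ := hy.exists_sum_eq (f m)
    exact ⟨c, (hker _).1 (by simp [← hc])⟩
  have smul_mem (m : M) : π • m ∈ S := by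
    obtain ⟨c, hc⟩ := smul_sub_sum_eq_zero m
    rw [smul_sub, sub_eq_zero] at hc
    exact hc ▸ S.smul_mem π (sum_y_mem c)
  refine Submodule.eq_top_iff'.2 fun m => ?_
  obtain ⟨c, hc⟩ := smul_sub_sum_eq_zero m
  obtain ⟨d, hd⟩ := hw.exists_sub_sum_mem _ hc
  obtain ⟨m', -, hm'⟩ := (Submodule.mem_smul_pointwise_iff_exists _ _ _).1 hd
  have hm : m = ∑ i, c i • y i + ∑ l, d l • w l + π • m' := by
    rw [hm']
    abel
  exact hm ▸ S.add_mem (S.add_mem (sum_y_mem c) (sum_w_mem d)) (smul_mem m')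

theorem pow_succ_dvd_and_dvd_of_sum_add_sum_eq_zero {y : ι → M}
    (hker : ∀ m, f m = 0 ↔ π • m = 0) (hy : IsTorsionBasis π a (f ∘ y))
    (hw : IsTorsionImageBasis π w) {c : ι → R} {d : κ → R}
    (h : ∑ i, c i • y i + ∑ l, d l • w l = 0) :
    (∀ i, π ^ (a i + 1) ∣ c i) ∧ ∀ l, π ∣ d l := by
  have pow_dvd (c : ι → R) (hc : π • ∑ i, c i • y i = 0) (i : ι) : π ^ a i ∣ c i := by
    refine (hy.sum_smul_eq_zero_iff c).1 ?_ i
    simpa using (hker _).2 hc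
  have smul_sum_w : π • ∑ l, d l • w l = 0 := by
    simp [Finset.smul_sum, smul_comm π, hw.smul_eq_zero]
  have dvd_c (i : ι) : π ∣ c i := by
    refine (dvd_pow_self π (Nat.one_le_iff_ne_zero.1 (hy.one_le_exponent i))).trans
      (pow_dvd c ?_ i)
    simpa [smul_sum_w] using congrArg (π • ·) h
  choose c' hc' using dvd_c
  have sum_y_eq : ∑ i, c i • y i = π • ∑ i, c' i • y i := by
    simp only [hc', mul_smul, Finset.smul_sum]
  have dvd_d : ∀ l, π ∣ d l := by
    refine hw.dvd_of_sum_mem d ?_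
    rw [eq_neg_of_add_eq_zero_right h, sum_y_eq]
    exact Submodule.neg_mem _ (Submodule.smul_mem_pointwise_smul _ _ _ Submodule.mem_top)
  have sum_w_eq_zero : ∑ l, d l • w l = 0 :=
    Finset.sum_eq_zero fun l _ => smul_eq_zero_of_dvd (dvd_d l) (hw.smul_eq_zero l)
  refine ⟨fun i => ?_, dvd_d⟩
  rw [hc', pow_succ']
  refine mul_dvd_mul_left π (pow_dvd c' ?_ i)
  rwa [sum_w_eq_zero, add_zero, sum_y_eq] at h

theorem IsTorsionBasis.sumElim_of_comp {y : ι → M}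
    (hker : ∀ m, f m = 0 ↔ π • m = 0) (hy : IsTorsionBasis π a (f ∘ y))
    (hw : IsTorsionImageBasis π w) :
    IsTorsionBasis π (Sum.elim (a · + 1) fun _ => 1) (Sum.elim y w) where
  one_le_exponent := by rintro (_ | _) <;> simp
  span_eq_top := span_range_sumElim_eq_top hker hy hw
  sum_smul_eq_zero_iff c := by
    have pow_smul_y (i : ι) : π ^ (a i + 1) • y i = 0 := by
      rw [pow_succ', mul_smul, ← hker, map_smul]
      exact hy.pow_smul_eq_zero i
    simp only [Fintype.sum_sum_type, Sum.elim_inl, Sum.elim_inr, Sum.forall, pow_one]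
    refine ⟨pow_succ_dvd_and_dvd_of_sum_add_sum_eq_zero hker hy hw, fun ⟨hc, hd⟩ => ?_⟩
    rw [Finset.sum_eq_zero fun i _ => smul_eq_zero_of_dvd (hc i) (pow_smul_y i),
      Finset.sum_eq_zero fun l _ => smul_eq_zero_of_dvd (hd l) (hw.smul_eq_zero l), add_zero]

end Lift

end TorsionBasis

section PowSMulTop

variable {R : Type*} [CommRing R] (π : R) (T : Type*) [AddCommGroup T] [Module R T]

/-- The submodule `π ^ j T` of `T`, encoded as the product of the ideal `(π ^ j)` with `T`. -/
abbrev powSMulTop (j : ℕ) : Submodule R T := Ideal.span {π ^ j} • ⊤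

theorem powSMulTop_succ (j : ℕ) : powSMulTop π T (j + 1) = π • powSMulTop π T j := by
  rw [powSMulTop, pow_succ', ← Ideal.span_singleton_mul_span_singleton, Submodule.mul_smul,
    Submodule.ideal_span_singleton_smul]

theorem comap_subtype_powSMulTop_succ (j : ℕ) :
    (powSMulTop π T (j + 1)).comap (powSMulTop π T j).subtype = π • ⊤ := by
  ext x
  rw [Submodule.mem_comap, powSMulTop_succ, ← Submodule.ideal_span_singleton_smul,
    ← Submodule.ideal_span_singleton_smul, Submodule.mem_smul_top_iff, Submodule.subtype_apply]

/-- Multiplication by `π` as a map `π ^ j T → π ^ (j + 1) T`. -/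
def powSMulTopMap (j : ℕ) : powSMulTop π T j →ₗ[R] powSMulTop π T (j + 1) :=
  (LinearMap.lsmul R T π).restrict fun _ hx =>
    powSMulTop_succ π T j ▸ Submodule.smul_mem_pointwise_smul _ _ _ hx

theorem powSMulTopMap_surjective (j : ℕ) : Function.Surjective (powSMulTopMap π T j) := by
  rintro ⟨y, hy⟩
  obtain ⟨x, hx, rfl⟩ := powSMulTop_succ π T j ▸ hy
  exact ⟨⟨x, hx⟩, rfl⟩

theorem powSMulTopMap_eq_zero_iff (j : ℕ) (x : powSMulTop π T j) :
    powSMulTopMap π T j x = 0 ↔ π • x = 0 := by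
  simp [powSMulTopMap, Subtype.ext_iff]

variable {π T}

theorem free_and_finite_quotSMulTop_powSMulTop {j r : ℕ}
    (e : (powSMulTop π T j ⧸ (powSMulTop π T (j + 1)).comap (powSMulTop π T j).subtype)
      ≃ₗ[R] (Fin r → R ⧸ Ideal.span {π})) :
    Module.Free (R ⧸ Ideal.span {π}) (QuotSMulTop π (powSMulTop π T j)) ∧
      Module.Finite (R ⧸ Ideal.span {π}) (QuotSMulTop π (powSMulTop π T j)) := by
  let eQuot : QuotSMulTop π (powSMulTop π T j) ≃ₗ[R ⧸ Ideal.span {π}]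
      (Fin r → R ⧸ Ideal.span {π}) :=
    (Submodule.quotEquivOfEq _ _ (comap_subtype_powSMulTop_succ π T j).symm ≪≫ₗ e)
      |>.extendScalarsOfSurjective Ideal.Quotient.mk_surjective
  exact ⟨.of_equiv eQuot.symm, .equiv eQuot.symm⟩

theorem exists_isTorsionBasis_powSMulTop_of_succ [IsLocalRing (R ⧸ Ideal.span {π})] {j : ℕ}
    [Module.Free (R ⧸ Ideal.span {π}) (QuotSMulTop π (powSMulTop π T j))]
    [Module.Finite (R ⧸ Ideal.span {π}) (QuotSMulTop π (powSMulTop π T j))]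
    [Module.Free (R ⧸ Ideal.span {π}) (QuotSMulTop π (powSMulTop π T (j + 1)))]
    (hj : ∃ (t : ℕ) (a : Fin t → ℕ) (x : Fin t → powSMulTop π T (j + 1)),
      IsTorsionBasis π a x) :
    ∃ (t : ℕ) (a : Fin t → ℕ) (x : Fin t → powSMulTop π T j), IsTorsionBasis π a x := by
  obtain ⟨t, a, x, hx⟩ := hj
  have hsurj := powSMulTopMap_surjective π T j
  have hker := powSMulTopMap_eq_zero_iff π T j
  obtain ⟨y, rfl⟩ := hsurj.comp_left x
  obtain ⟨n, w, hw⟩ := exists_isTorsionImageBasis hsurj hker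
  exact ⟨t + n, _, _, (hx.sumElim_of_comp hker hw).reindex finSumFinEquiv.symm⟩

theorem torsion_pelem_crit_general [IsLocalRing (R ⧸ Ideal.span {π})] {N : ℕ}
    (hkill : ∀ x : T, π ^ N • x = 0)
    (hfree : ∀ j : ℕ, ∃ r : ℕ, Nonempty
      ((powSMulTop π T j ⧸ (powSMulTop π T (j + 1)).comap (powSMulTop π T j).subtype)
        ≃ₗ[R] (Fin r → R ⧸ Ideal.span {π}))) :
    ∃ (t : ℕ) (a : Fin t → ℕ), (∀ i, 1 ≤ a i) ∧
      Nonempty (T ≃ₗ[R] ((i : Fin t) → R ⧸ Ideal.span {π ^ a i})) := by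
  have hfree_finite (j : ℕ) := (hfree j).elim fun _ ⟨e⟩ => free_and_finite_quotSMulTop_powSMulTop e
  have exists_basis (j : ℕ) (hj : j ≤ N) :
      ∃ (t : ℕ) (a : Fin t → ℕ) (x : Fin t → powSMulTop π T j), IsTorsionBasis π a x := by
    induction hj using Nat.decreasingInduction with
    | self =>
      have : Subsingleton (powSMulTop π T N) := by
        rw [Submodule.subsingleton_iff_eq_bot, powSMulTop, Submodule.ideal_span_singleton_smul]
        exact (Submodule.eq_bot_iff _).2 fun _ ⟨x, _, hx⟩ => hx ▸ hkill x
      exact ⟨0, Fin.elim0, Fin.elim0, .of_subsingleton⟩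
    | of_succ j _ ih =>
      obtain ⟨_, _⟩ := hfree_finite j
      obtain ⟨_, _⟩ := hfree_finite (j + 1)
      exact exists_isTorsionBasis_powSMulTop_of_succ ih
  obtain ⟨t, a, x, hx⟩ := exists_basis 0 N.zero_le
  have hzero : powSMulTop π T 0 = ⊤ := by simp [powSMulTop]
  exact ⟨t, a, hx.one_le_exponent, (hx.map (.ofTop _ hzero)).nonempty_linearEquiv⟩

end PowSMulTop

theorem isLocalRing_quotient_span_singleton {R S : Type*} [CommRing R] [CommRing S]
    [IsLocalRing S] (φ : R →+* S) [IsLocalHom φ] {π : R} (hπ : φ π = 0) :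
    IsLocalRing (R ⧸ Ideal.span {π}) := by
  have : IsLocalRing R := φ.domain_isLocalRing
  have : Nontrivial (R ⧸ Ideal.span {π}) := by
    rw [Ideal.Quotient.nontrivial_iff, Ne, Ideal.span_singleton_eq_top]
    exact fun hunit => not_isUnit_zero (hπ ▸ hunit.map φ)
  exact .of_surjective' (Ideal.Quotient.mk _) Ideal.Quotient.mk_surjective

theorem isLocalRing_powerSeries_wittVector_quotient_span_p {p : ℕ} [Fact p.Prime] {k : Type*}
    [Field k] [CharP k p] :
    IsLocalRing (PowerSeries (WittVector p k) ⧸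
      Ideal.span {(p : PowerSeries (WittVector p k))}) := by
  let residue : PowerSeries (WittVector p k) →+* k :=
    WittVector.constantCoeff.comp PowerSeries.constantCoeff
  have : IsLocalHom residue := ⟨fun f hf => PowerSeries.isUnit_iff_constantCoeff.2
    (WittVector.isUnit_of_coeff_zero_ne_zero _ hf.ne_zero)⟩
  exact isLocalRing_quotient_span_singleton residue (by rw [map_natCast, CharP.cast_eq_zero])

theorem torsion_pelem_crit
    (T : Type*) [AddCommGroup T] [Module 𝕊 T] [Module.Finite 𝕊 T]
    (N : ℕ) (hN : 1 ≤ N) (hkill : ∀ x : T, (p : 𝕊) ^ N • x = 0)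
    (hfree : ∀ j : ℕ, ∃ r : ℕ, Nonempty
      ((↥(Ideal.span {(p : 𝕊) ^ j} • (⊤ : Submodule 𝕊 T)) ⧸
          (Ideal.span {(p : 𝕊) ^ (j + 1)} • (⊤ : Submodule 𝕊 T)).comap
            (Ideal.span {(p : 𝕊) ^ j} • (⊤ : Submodule 𝕊 T)).subtype)
        ≃ₗ[𝕊] (Fin r → 𝕊 ⧸ Ideal.span {(p : 𝕊)}))) :
    ∃ (t : ℕ) (a : Fin t → ℕ), (∀ i, 1 ≤ a i) ∧
      Nonempty (T ≃ₗ[𝕊] ((i : Fin t) → 𝕊 ⧸ Ideal.span {(p : 𝕊) ^ a i})) := by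
  have := isLocalRing_powerSeries_wittVector_quotient_span_p (p := p) (k := k)
  exact torsion_pelem_crit_general hkill hfree
end

section
/- Let W be a commutative 𝔖-algebra in which p is a non-zero-divisor and such that for every integer n ≥ 1 the induced ring map 𝔖/(p^n) → W/(p^n) is injective. Let 0 → A → B → C → 0 be a short exact sequence of 𝔖-modules whose underlying 𝔖-modules are of the form A ≅ 𝔖^{⊕a} ⊕ ⊕_i 𝔖/(p^{a_i}), B ≅ 𝔖^{⊕b} ⊕ ⊕_i 𝔖/(p^{b_i}), and C ≅ 𝔖^{⊕c} ⊕ ⊕_i 𝔖/(p^{c_i}) for nonnegative integers a, b, c and finite families of positive integers (a_i), (b_i), (c_i). If the induced sequence of W-modules 0 → A ⊗_𝔖 W → B ⊗_𝔖 W → C ⊗_𝔖 W → 0 is split exact, then the induced sequence 0 → A_tors → B_tors → C_tors → 0 is a split exact sequence of 𝔖-modules. -/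
/-!
Context: `p` a prime, `k` a perfect field of characteristic `p`, `𝕊 = W(k)[[z]]`.
For an `𝕊`-module `M`, `M_tors` denotes the `p`-power torsion submodule.
`W` is a commutative `𝕊`-algebra in which `p` is a non-zero-divisor and such that
`𝕊/(p^n) → W/(p^n)` is injective for all `n ≥ 1`.

STATEMENT 2: given a short exact sequence `0 → A → B → C → 0` of `𝕊`-modules whose terms
are of the form `𝕊^{⊕a} ⊕ ⨁ᵢ 𝕊/(p^{aᵢ})` (resp. for `b`, `c`), if the base-changed
sequence `0 → A ⊗ W → B ⊗ W → C ⊗ W → 0` is split exact, then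
`0 → A_tors → B_tors → C_tors → 0` is a split exact sequence of `𝕊`-modules.
-/

open TensorProduct

/-- The `p`-power torsion submodule of an `R`-module `M`. -/
def pPowerTorsion (R : Type*) [CommRing R] (p : R) (M : Type*) [AddCommGroup M]
    [Module R M] : Submodule R M where
  carrier := {x | ∃ n : ℕ, p ^ n • x = 0}
  add_mem' := by
    rintro x y ⟨m, hm⟩ ⟨n, hn⟩
    refine ⟨m + n, ?_⟩
    have hx : p ^ (m + n) • x = 0 := by
      rw [pow_add, mul_comm, mul_smul, hm, smul_zero]
    have hy : p ^ (m + n) • y = 0 := by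
      rw [pow_add, mul_smul, hn, smul_zero]
    rw [smul_add, hx, hy, add_zero]
  zero_mem' := ⟨0, smul_zero _⟩
  smul_mem' := by
    rintro c x ⟨n, hn⟩
    exact ⟨n, by rw [smul_comm, hn, smul_zero]⟩

/-- The map induced on `p`-power torsion submodules by a linear map. -/
def mapPTors {R : Type*} [CommRing R] (p : R) {M N : Type*} [AddCommGroup M]
    [AddCommGroup N] [Module R M] [Module R N] (f : M →ₗ[R] N) :
    pPowerTorsion R p M →ₗ[R] pPowerTorsion R p N :=
  f.restrict fun x hx => by
    obtain ⟨n, hn⟩ := hx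
    exact ⟨n, by rw [← map_smul, hn, map_zero]⟩

variable {p : ℕ} [Fact p.Prime] {k : Type*} [Field k] [CharP k p] [PerfectField k]

local notation "𝕊" => PowerSeries (WittVector p k)

/-!
Call a linear map `φ` pure at `ϖ` if `ϖ ^ n ∣ φ x` implies `ϖ ^ n ∣ x`. The hypothesis on `W` says
that `R → W` is pure at `ϖ`, and this passes to the unit `A → W ⊗ A` when `A` is a product of
copies of `R` and of quotients `R / ϖ ^ m`. A retraction of `W ⊗ f` turns a divisor of `f x` in `B`
into one of `1 ⊗ x` in `W ⊗ A`, so `f` is itself pure. Purity of the kernel of `g` means exactly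
that elements killed by `ϖ ^ n` lift along `g` to elements killed by `ϖ ^ n`. Lifting the generators
of the cyclic summands `R / ϖ ^ m` of `C` in this way splits the sequence of torsion submodules.
-/

/-- Purity of `φ` at the powers of a single element `ϖ`: whenever `ϖ ^ n` divides `φ x` in `N`, it
already divides `x` in `M`. Injectivity of `φ` is not part of the notion, so it makes sense for unit
maps `M → W ⊗ M` as well as for inclusions of submodules. -/
def IsPowerPure {R M N : Type*} [CommRing R] [AddCommGroup M] [AddCommGroup N] [Module R M]
    [Module R N] (ϖ : R) (φ : M →ₗ[R] N) : Prop :=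
  ∀ ⦃n : ℕ⦄ ⦃x : M⦄ ⦃y : N⦄, ϖ ^ n • y = φ x → ∃ x', ϖ ^ n • x' = x

section Purity

variable {R : Type*} [CommRing R] {ϖ : R}
  {M N L : Type*} [AddCommGroup M] [AddCommGroup N] [AddCommGroup L]
  [Module R M] [Module R N] [Module R L]

theorem IsPowerPure.of_comp {φ : M →ₗ[R] N} {ψ : N →ₗ[R] L} (h : IsPowerPure ϖ (ψ ∘ₗ φ)) :
    IsPowerPure ϖ φ := fun n x y hy ↦
  h (y := ψ y) (by rw [← map_smul, hy, LinearMap.comp_apply])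

theorem isPowerPure_algebraLinearMap_iff {W : Type*} [CommRing W] [Algebra R W] :
    IsPowerPure ϖ (Algebra.linearMap R W) ↔ ∀ n : ℕ, 1 ≤ n → ∀ x : R,
      algebraMap R W x ∈ Ideal.span {algebraMap R W ϖ ^ n} → x ∈ Ideal.span {ϖ ^ n} := by
  simp only [Ideal.mem_span_singleton]
  constructor
  · rintro h n - x ⟨w, hw⟩
    obtain ⟨x', hx'⟩ := h (n := n) (x := x) (y := w) (by simp [Algebra.smul_def, hw])
    exact ⟨x', hx'.symm⟩
  · intro h n x w hw
    rcases n.eq_zero_or_pos with rfl | hn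
    · exact ⟨x, by simp⟩
    · obtain ⟨x', rfl⟩ := h n hn x ⟨w, by simpa [Algebra.smul_def] using hw.symm⟩
      exact ⟨x', rfl⟩

variable (W : Type*) [CommRing W] [Algebra R W]

theorem isPowerPure_mk_self (hW : IsPowerPure ϖ (Algebra.linearMap R W)) :
    IsPowerPure ϖ (TensorProduct.mk R W R 1) := by
  have hrid : (TensorProduct.rid R W).toLinearMap ∘ₗ TensorProduct.mk R W R 1
      = Algebra.linearMap R W := by
    ext
    simp
  exact .of_comp (hrid ▸ hW)

theorem isPowerPure_mk_quotient (hW : IsPowerPure ϖ (Algebra.linearMap R W)) (m : ℕ) :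
    IsPowerPure ϖ (TensorProduct.mk R W (R ⧸ Ideal.span {ϖ ^ m}) 1) := by
  intro n q t ht
  obtain ⟨x, rfl⟩ := Ideal.Quotient.mk_surjective q
  obtain ⟨w, hw⟩ := Submodule.Quotient.mk_surjective _
    (TensorProduct.tensorQuotEquivQuotSMul W (Ideal.span {ϖ ^ m}) t)
  obtain ⟨v, hv⟩ : ∃ v : W, ϖ ^ m • v = ϖ ^ n • w - algebraMap R W x := by
    have hmk := congrArg (TensorProduct.tensorQuotEquivQuotSMul W (Ideal.span {ϖ ^ m})) ht
    rw [map_smul, ← hw, TensorProduct.mk_apply, TensorProduct.tensorQuotEquivQuotSMul_tmul_mk,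
      ← Submodule.Quotient.mk_smul, Submodule.Quotient.eq, Submodule.ideal_span_singleton_smul,
      ← Algebra.algebraMap_eq_smul_one] at hmk
    obtain ⟨v, -, hv⟩ := hmk
    exact ⟨v, hv⟩
  have hdvd : ϖ ^ min n m • (ϖ ^ (n - min n m) • w - ϖ ^ (m - min n m) • v)
      = Algebra.linearMap R W x := by
    rw [smul_sub, smul_smul, smul_smul, ← pow_add, ← pow_add,
      Nat.add_sub_cancel' (min_le_left n m), Nat.add_sub_cancel' (min_le_right n m), hv,
      sub_sub_cancel, Algebra.linearMap_apply]
  obtain ⟨x', rfl⟩ := hW hdvd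
  rcases le_total n m with hnm | hmn
  · exact ⟨Ideal.Quotient.mk _ x', by rw [min_eq_left hnm]; rfl⟩
  · refine ⟨0, ?_⟩
    rw [smul_zero, min_eq_right hmn, eq_comm, Ideal.Quotient.eq_zero_iff_mem]
    exact Ideal.mem_span_singleton.2 ⟨x', rfl⟩

variable {W}

theorem IsPowerPure.mk_prod (hM : IsPowerPure ϖ (TensorProduct.mk R W M 1))
    (hN : IsPowerPure ϖ (TensorProduct.mk R W N 1)) :
    IsPowerPure ϖ (TensorProduct.mk R W (M × N) 1) := by
  rintro n ⟨x, y⟩ t ht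
  obtain ⟨x', hx'⟩ := hM (y := (LinearMap.fst R M N).lTensor W t) (by
    rw [← map_smul, ht]; rfl)
  obtain ⟨y', hy'⟩ := hN (y := (LinearMap.snd R M N).lTensor W t) (by
    rw [← map_smul, ht]; rfl)
  exact ⟨(x', y'), Prod.ext hx' hy'⟩

theorem IsPowerPure.mk_pi {ι : Type*} {P : ι → Type*} [∀ i, AddCommGroup (P i)]
    [∀ i, Module R (P i)] (hP : ∀ i, IsPowerPure ϖ (TensorProduct.mk R W (P i) 1)) :
    IsPowerPure ϖ (TensorProduct.mk R W (∀ i, P i) 1) := by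
  intro n x t ht
  have hx (i : ι) : ∃ x', ϖ ^ n • x' = x i :=
    hP i (y := (LinearMap.proj (R := R) (φ := P) i).lTensor W t) (by rw [← map_smul, ht]; rfl)
  choose x' hx' using hx
  exact ⟨x', funext hx'⟩

theorem IsPowerPure.mk_of_equiv (e : M ≃ₗ[R] N) (hN : IsPowerPure ϖ (TensorProduct.mk R W N 1)) :
    IsPowerPure ϖ (TensorProduct.mk R W M 1) := by
  intro n x t ht
  obtain ⟨x', hx'⟩ := hN (x := e x) (y := e.toLinearMap.lTensor W t) (by
    rw [← map_smul, ht]; rfl)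
  exact ⟨e.symm x', by rw [← map_smul, hx', e.symm_apply_apply]⟩

theorem IsPowerPure.of_baseChange_leftInverse {f : M →ₗ[R] N}
    (hM : IsPowerPure ϖ (TensorProduct.mk R W M 1)) {r : W ⊗[R] N →ₗ[W] W ⊗[R] M}
    (hr : r ∘ₗ f.baseChange W = LinearMap.id) : IsPowerPure ϖ f := by
  have hunit : (r.restrictScalars R ∘ₗ TensorProduct.mk R W N 1) ∘ₗ f
      = TensorProduct.mk R W M 1 := by
    ext x
    exact LinearMap.congr_fun hr (1 ⊗ₜ x)
  exact .of_comp (hunit ▸ hM)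

end Purity

section ShortExact

variable {R : Type*} [CommRing R] {ϖ : R}
  {A B C : Type*} [AddCommGroup A] [AddCommGroup B] [AddCommGroup C]
  [Module R A] [Module R B] [Module R C] {f : A →ₗ[R] B} {g : B →ₗ[R] C}

theorem IsPowerPure.exists_lift_smul_eq_zero (hf : IsPowerPure ϖ f) (hfg : Function.Exact f g)
    (hg : Function.Surjective g) {n : ℕ} {x : C} (hx : ϖ ^ n • x = 0) :
    ∃ y : B, ϖ ^ n • y = 0 ∧ g y = x := by
  obtain ⟨y, rfl⟩ := hg x
  obtain ⟨u, hu⟩ := (hfg (ϖ ^ n • y)).1 (by rw [map_smul, hx])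
  obtain ⟨v, rfl⟩ := hf hu.symm
  refine ⟨y - f v, ?_, ?_⟩
  · rw [smul_sub, ← hu, map_smul, sub_self]
  · rw [map_sub, hfg.apply_apply_eq_zero, sub_zero]

theorem IsPowerPure.exists_lift_quotient (hf : IsPowerPure ϖ f) (hfg : Function.Exact f g)
    (hg : Function.Surjective g) {m : ℕ} (h : (R ⧸ Ideal.span {ϖ ^ m}) →ₗ[R] C) :
    ∃ σ : (R ⧸ Ideal.span {ϖ ^ m}) →ₗ[R] B, g ∘ₗ σ = h := by
  have hone : ϖ ^ m • (1 : R ⧸ Ideal.span {ϖ ^ m}) = 0 := by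
    rw [Algebra.smul_def, mul_one]
    exact Ideal.Quotient.eq_zero_iff_mem.2 (Ideal.mem_span_singleton_self _)
  obtain ⟨y, hy, hgy⟩ := hf.exists_lift_smul_eq_zero hfg hg (n := m) (x := h 1)
    (by rw [← map_smul, hone, map_zero])
  refine ⟨Submodule.liftQSpanSingleton (ϖ ^ m) (LinearMap.toSpanSingleton R B y) hy, ?_⟩
  ext
  change g ((1 : R) • y) = h 1
  rw [one_smul, hgy]

theorem IsPowerPure.exists_lift_pi_quotient (hf : IsPowerPure ϖ f) (hfg : Function.Exact f g)
    (hg : Function.Surjective g) {κ : Type*} [Finite κ] {m : κ → ℕ}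
    (h : (∀ i, R ⧸ Ideal.span {ϖ ^ m i}) →ₗ[R] C) :
    ∃ σ : (∀ i, R ⧸ Ideal.span {ϖ ^ m i}) →ₗ[R] B, g ∘ₗ σ = h := by
  classical
  have := Fintype.ofFinite κ
  choose σ hσ using fun i ↦ hf.exists_lift_quotient hfg hg
    (h ∘ₗ LinearMap.single R (fun j ↦ R ⧸ Ideal.span {ϖ ^ m j}) i)
  refine ⟨LinearMap.lsum R _ R σ, LinearMap.pi_ext fun i q ↦ ?_⟩
  rw [LinearMap.comp_apply, LinearMap.lsum_piSingle]
  exact LinearMap.congr_fun (hσ i) q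

theorem mapPTors_injective (hf : Function.Injective f) : Function.Injective (mapPTors ϖ f) :=
  fun _ _ hxy ↦ Subtype.ext (hf (congrArg Subtype.val hxy))

theorem mapPTors_exact (hf : Function.Injective f) (hfg : Function.Exact f g) :
    Function.Exact (mapPTors ϖ f) (mapPTors ϖ g) := by
  rintro ⟨y, n, hn⟩
  constructor
  · intro hy
    obtain ⟨x, rfl⟩ := (hfg y).1 (congrArg Subtype.val hy)
    exact ⟨⟨x, n, hf (by rw [map_smul, hn, map_zero])⟩, rfl⟩
  · rintro ⟨x, hx⟩
    rw [← hx]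
    exact Subtype.ext (hfg.apply_apply_eq_zero x.1)

theorem fst_eq_zero_of_mem_pPowerTorsion (hA : IsSMulRegular A ϖ) {z : A × B}
    (hz : z ∈ pPowerTorsion R ϖ (A × B)) : z.1 = 0 := by
  obtain ⟨n, hn⟩ := hz
  exact hA.pow n ((congrArg Prod.fst hn).trans (smul_zero _).symm)

theorem IsPowerPure.exists_mapPTors_section (hf : IsPowerPure ϖ f) (hfg : Function.Exact f g)
    (hg : Function.Surjective g) {F : Type*} [AddCommGroup F] [Module R F]
    (hF : IsSMulRegular F ϖ) {κ : Type*} [Finite κ] {m : κ → ℕ}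
    (e : C ≃ₗ[R] F × (∀ i, R ⧸ Ideal.span {ϖ ^ m i})) :
    ∃ s : pPowerTorsion R ϖ C →ₗ[R] pPowerTorsion R ϖ B,
      mapPTors ϖ g ∘ₗ s = LinearMap.id := by
  obtain ⟨σ, hσ⟩ := hf.exists_lift_pi_quotient hfg hg (e.symm.toLinearMap ∘ₗ LinearMap.inr R F _)
  refine ⟨mapPTors ϖ (σ ∘ₗ LinearMap.snd R F _ ∘ₗ e.toLinearMap), LinearMap.ext fun x ↦ ?_⟩
  have hfst : (e x).1 = 0 :=
    fst_eq_zero_of_mem_pPowerTorsion hF (mapPTors ϖ e.toLinearMap x).2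
  apply Subtype.ext
  calc g (σ (e x).2) = e.symm (0, (e x).2) := LinearMap.congr_fun hσ _
    _ = e.symm (e x) := by rw [← hfst]
    _ = x := e.symm_apply_apply x

end ShortExact

theorem torsion_sequence_split_general {R : Type*} [CommRing R] {ϖ : R}
    (hϖ : ϖ ∈ nonZeroDivisors R) (W : Type*) [CommRing W] [Algebra R W]
    (hW : IsPowerPure ϖ (Algebra.linearMap R W))
    {A B C : Type*} [AddCommGroup A] [AddCommGroup B] [AddCommGroup C]
    [Module R A] [Module R B] [Module R C]
    {ι κ : Type*} {as : κ → ℕ} (eA : A ≃ₗ[R] (ι → R) × (∀ i, R ⧸ Ideal.span {ϖ ^ as i}))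
    {ι' κ' : Type*} [Finite κ'] {cs : κ' → ℕ}
    (eC : C ≃ₗ[R] (ι' → R) × (∀ i, R ⧸ Ideal.span {ϖ ^ cs i}))
    {f : A →ₗ[R] B} {g : B →ₗ[R] C}
    (hf : Function.Injective f) (hfg : Function.Exact f g) (hg : Function.Surjective g)
    (hWinj : Function.Injective (f.baseChange W))
    (hWsplit : ∃ s : W ⊗[R] C →ₗ[W] W ⊗[R] B, g.baseChange W ∘ₗ s = LinearMap.id) :
    Function.Injective (mapPTors ϖ f) ∧
    Function.Exact (mapPTors ϖ f) (mapPTors ϖ g) ∧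
    Function.Surjective (mapPTors ϖ g) ∧
    ∃ s : pPowerTorsion R ϖ C →ₗ[R] pPowerTorsion R ϖ B,
      mapPTors ϖ g ∘ₗ s = LinearMap.id := by
  have hWexact : Function.Exact (f.baseChange W) (g.baseChange W) := lTensor_exact W hfg hg
  obtain ⟨r, hr⟩ : ∃ r, r ∘ₗ f.baseChange W = LinearMap.id :=
    ((hWexact.split_tfae'.out 0 1 rfl rfl).1 ⟨hWinj, hWsplit⟩).2
  have hunit : IsPowerPure ϖ (TensorProduct.mk R W A 1) :=
    .mk_of_equiv eA (.mk_prod (.mk_pi fun _ ↦ isPowerPure_mk_self W hW)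
      (.mk_pi fun i ↦ isPowerPure_mk_quotient W hW (as i)))
  have hpure : IsPowerPure ϖ f := hunit.of_baseChange_leftInverse hr
  have hreg : IsSMulRegular (ι' → R) ϖ :=
    .pi fun _ ↦ Module.Flat.isSMulRegular_of_nonZeroDivisors hϖ
  obtain ⟨s, hs⟩ := hpure.exists_mapPTors_section hfg hg hreg eC
  exact ⟨mapPTors_injective hf, mapPTors_exact hf hfg,
    LinearMap.surjective_of_comp_eq_id _ _ hs, s, hs⟩

theorem natCast_mem_nonZeroDivisors_powerSeries_wittVector (q : ℕ) [Fact q.Prime]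
    (K : Type*) [CommRing K] [IsDomain K] [CharP K q] :
    (q : PowerSeries (WittVector q K)) ∈ nonZeroDivisors (PowerSeries (WittVector q K)) := by
  refine mem_nonZeroDivisors_of_ne_zero fun h ↦ WittVector.p_nonzero q K ?_
  simpa using congrArg PowerSeries.constantCoeff h

theorem torsion_sequence_split
    (W : Type*) [CommRing W] [Algebra 𝕊 W]
    (hreg : (p : W) ∈ nonZeroDivisors W)
    (hinj : ∀ n : ℕ, 1 ≤ n → ∀ x : 𝕊,
      algebraMap 𝕊 W x ∈ Ideal.span {(p : W) ^ n} → x ∈ Ideal.span {(p : 𝕊) ^ n})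
    (A B C : Type*) [AddCommGroup A] [AddCommGroup B] [AddCommGroup C]
    [Module 𝕊 A] [Module 𝕊 B] [Module 𝕊 C]
    (a : ℕ) (na : ℕ) (as : Fin na → ℕ) (has : ∀ i, 1 ≤ as i)
    (hA : Nonempty (A ≃ₗ[𝕊]
      ((Fin a → 𝕊) × ((i : Fin na) → 𝕊 ⧸ Ideal.span {(p : 𝕊) ^ as i}))))
    (b : ℕ) (nb : ℕ) (bs : Fin nb → ℕ) (hbs : ∀ i, 1 ≤ bs i)
    (hB : Nonempty (B ≃ₗ[𝕊]
      ((Fin b → 𝕊) × ((i : Fin nb) → 𝕊 ⧸ Ideal.span {(p : 𝕊) ^ bs i}))))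
    (c : ℕ) (nc : ℕ) (cs : Fin nc → ℕ) (hcs : ∀ i, 1 ≤ cs i)
    (hC : Nonempty (C ≃ₗ[𝕊]
      ((Fin c → 𝕊) × ((i : Fin nc) → 𝕊 ⧸ Ideal.span {(p : 𝕊) ^ cs i}))))
    (f : A →ₗ[𝕊] B) (g : B →ₗ[𝕊] C)
    (hf : Function.Injective f) (hfg : Function.Exact f g) (hg : Function.Surjective g)
    (hWinj : Function.Injective (f.baseChange W))
    (hWexact : Function.Exact (f.baseChange W) (g.baseChange W))
    (hWsurj : Function.Surjective (g.baseChange W))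
    (hWsplit : ∃ s : W ⊗[𝕊] C →ₗ[W] W ⊗[𝕊] B, (g.baseChange W).comp s = LinearMap.id) :
    Function.Injective (mapPTors (p : 𝕊) f) ∧
    Function.Exact (mapPTors (p : 𝕊) f) (mapPTors (p : 𝕊) g) ∧
    Function.Surjective (mapPTors (p : 𝕊) g) ∧
    ∃ s : pPowerTorsion 𝕊 (p : 𝕊) C →ₗ[𝕊] pPowerTorsion 𝕊 (p : 𝕊) B,
      (mapPTors (p : 𝕊) g).comp s = LinearMap.id := by
  have hW : IsPowerPure (p : 𝕊) (Algebra.linearMap 𝕊 W) :=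
    isPowerPure_algebraLinearMap_iff.2 (by simpa only [map_natCast] using hinj)
  exact torsion_sequence_split_general
    (natCast_mem_nonZeroDivisors_powerSeries_wittVector p k) W hW hA.some hC.some hf hfg hg
    hWinj hWsplit
end

section
/- Let W be a commutative 𝔖-algebra in which p is a non-zero-divisor and such that for every integer n ≥ 1 the induced ring map 𝔖/(p^n) → W/(p^n) is injective. Let T = ⊕_{i=1}^{r} 𝔖/(p^{a_i}) for positive integers a_i, and let T' = 𝔖^{⊕m} ⊕ ⊕_{j=1}^{s} 𝔖/(p^{b_j}) for a nonnegative integer m and positive integers b_j. Then every short exact sequence of 𝔖-modules 0 → T' → X → T → 0 whose base change 0 → T' ⊗_𝔖 W → X ⊗_𝔖 W → T ⊗_𝔖 W → 0 is a split exact sequence of W-modules is itself split exact. -/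
/-!
Context: `p` a prime, `k` a perfect field of characteristic `p`, `𝕊 = W(k)[[z]]`.
`W` is a commutative `𝕊`-algebra in which `p` is a non-zero-divisor and such that
`𝕊/(p^n) → W/(p^n)` is injective for all `n ≥ 1`.

STATEMENT 3: with `T = ⨁_{i=1}^r 𝕊/(p^{aᵢ})` and `T' = 𝕊^{⊕m} ⊕ ⨁_{j=1}^s 𝕊/(p^{bⱼ})`,
every short exact sequence `0 → T' → X → T → 0` of `𝕊`-modules whose base change to `W`
is split exact is itself split exact.
-/

open TensorProduct

variable {p : ℕ} [Fact p.Prime] {k : Type*} [Field k] [CharP k p] [PerfectField k]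

local notation "𝕊" => PowerSeries (WittVector p k)

/-!
The extensions of `S ⧸ (d)` by `M` are classified by `M / d M` when `d` is regular: lift `1` to `x`
and take the class of `d x`. So a sequence splits after base change to `W` only if this class dies
in `(W ⊗ M) / d (W ⊗ M)`, and injectivity of `M / d M → (W ⊗ M) / d (W ⊗ M)` then lets one correct
`x` to a lift killed by `d`. For `d = q ^ c` the latter map is `S ⧸ (q ^ c) → W ⧸ (q ^ c)` when
`M = S`, and `S ⧸ (q ^ min n c) → W ⧸ (q ^ min n c)` when `M = S ⧸ (q ^ n)`.
-/

section ReflectsDivisibility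

variable {S : Type*} (W : Type*) [CommRing S] [CommRing W] [Algebra S W]

/-- An element of `M` is divisible by `d` as soon as its image in `W ⊗ M` is; equivalently,
`M / d M → (W ⊗ M) / d (W ⊗ M)` is injective. When `M` is the kernel of an extension of `S ⧸ (d)`,
the obstruction to splitting it can then be tested over `W`. -/
def ReflectsDivisibility (d : S) (M : Type*) [AddCommGroup M] [Module S M] : Prop :=
  ∀ (t : M) (u : W ⊗[S] M), 1 ⊗ₜ t = d • u → ∃ t' : M, t = d • t'

variable {W} {d : S}

theorem ReflectsDivisibility.prod {M N : Type*} [AddCommGroup M] [Module S M] [AddCommGroup N]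
    [Module S N] (hM : ReflectsDivisibility W d M) (hN : ReflectsDivisibility W d N) :
    ReflectsDivisibility W d (M × N) := by
  intro t u h
  obtain ⟨x, hx⟩ := hM t.1 ((LinearMap.fst S M N).lTensor W u) <| by
    simpa using congrArg ((LinearMap.fst S M N).lTensor W) h
  obtain ⟨y, hy⟩ := hN t.2 ((LinearMap.snd S M N).lTensor W u) <| by
    simpa using congrArg ((LinearMap.snd S M N).lTensor W) h
  exact ⟨(x, y), Prod.ext hx hy⟩

theorem ReflectsDivisibility.pi {ι : Type*} {M : ι → Type*} [∀ i, AddCommGroup (M i)]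
    [∀ i, Module S (M i)] (hM : ∀ i, ReflectsDivisibility W d (M i)) :
    ReflectsDivisibility W d (∀ i, M i) := by
  intro t u h
  choose t' ht' using fun i ↦ hM i (t i) ((LinearMap.proj (R := S) i).lTensor W u) <| by
    simpa using congrArg ((LinearMap.proj (R := S) i).lTensor W) h
  exact ⟨t', funext ht'⟩

theorem reflectsDivisibility_self (h : ∀ x : S, algebraMap S W d ∣ algebraMap S W x → d ∣ x) :
    ReflectsDivisibility W d S := by
  intro x u hu
  refine h x ⟨TensorProduct.rid S W u, ?_⟩
  simpa [Algebra.smul_def] using congrArg (TensorProduct.rid S W) hu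

theorem reflectsDivisibility_quotient {I : Ideal S}
    (h : ((I ⊔ Ideal.span {d}).map (algebraMap S W)).under S ≤ I ⊔ Ideal.span {d}) :
    ReflectsDivisibility W d (S ⧸ I) := by
  intro t u hu
  obtain ⟨x, rfl⟩ := Ideal.Quotient.mk_surjective t
  set J := (I ⊔ Ideal.span {d}).map (algebraMap S W)
  have algebraMap_eq_zero {y : S} (hy : y ∈ I ⊔ Ideal.span {d}) : algebraMap S (W ⧸ J) y = 0 :=
    Ideal.Quotient.eq_zero_iff_mem.2 (Ideal.mem_map_of_mem _ hy)
  let φ : S ⧸ I →ₐ[S] W ⧸ J := Ideal.Quotient.liftₐ I (Algebra.ofId S (W ⧸ J))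
    fun y hy ↦ algebraMap_eq_zero (Ideal.mem_sup_left hy)
  have hx : algebraMap S (W ⧸ J) x = 0 := calc
    algebraMap S (W ⧸ J) x = φ.toLinearMap.liftBaseChange W (1 ⊗ₜ Ideal.Quotient.mk I x) := by
      rw [LinearMap.liftBaseChange_tmul, one_smul]; rfl
    _ = algebraMap S (W ⧸ J) d * φ.toLinearMap.liftBaseChange W u := by
      rw [hu, LinearMap.map_smul_of_tower, Algebra.smul_def]
    _ = 0 := by
      rw [algebraMap_eq_zero (Ideal.mem_sup_right (Ideal.mem_span_singleton_self d)), zero_mul]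
  have hxI : x ∈ I ⊔ Ideal.span {d} := h ((Ideal.Quotient.eq_zero_iff_mem (I := J)).1 hx)
  obtain ⟨z, hz, w, hw, rfl⟩ := Submodule.mem_sup.1 hxI
  obtain ⟨y, rfl⟩ := Ideal.mem_span_singleton.1 hw
  refine ⟨Ideal.Quotient.mk I y, ?_⟩
  rw [map_add, Ideal.Quotient.eq_zero_iff_mem.2 hz, zero_add, map_mul, Algebra.smul_def,
    Ideal.Quotient.algebraMap_eq]

end ReflectsDivisibility

section Powers

variable {S W : Type*} [CommRing S] [CommRing W] [Algebra S W] {q : S}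

theorem span_pow_sup_span_pow (q : S) (m n : ℕ) :
    Ideal.span {q ^ m} ⊔ Ideal.span {q ^ n} = Ideal.span {q ^ min m n} := by
  have antitone_span_pow : Antitone fun n ↦ Ideal.span {q ^ n} := fun _ _ h ↦
    Ideal.span_singleton_le_span_singleton.2 (pow_dvd_pow q h)
  exact (antitone_span_pow.map_inf m n).symm

theorem under_map_span_singleton_le {d : S}
    (h : ∀ x : S, algebraMap S W d ∣ algebraMap S W x → d ∣ x) :
    ((Ideal.span {d}).map (algebraMap S W)).under S ≤ Ideal.span {d} := by
  intro x hx
  rw [Ideal.mem_comap, Ideal.map_span, Set.image_singleton, Ideal.mem_span_singleton] at hx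
  exact Ideal.mem_span_singleton.2 (h x hx)

theorem reflectsDivisibility_pow_free_prod_torsion
    (hq : ∀ (n : ℕ) (x : S), algebraMap S W q ^ n ∣ algebraMap S W x → q ^ n ∣ x)
    (c : ℕ) (κ : Type*) {μ : Type*} (b : μ → ℕ) :
    ReflectsDivisibility W (q ^ c) ((κ → S) × (∀ j, S ⧸ Ideal.span {q ^ b j})) := by
  have hpow (n : ℕ) (x : S) (hx : algebraMap S W (q ^ n) ∣ algebraMap S W x) : q ^ n ∣ x :=
    hq n x (map_pow (algebraMap S W) q n ▸ hx)
  refine .prod (.pi fun _ ↦ reflectsDivisibility_self (hpow c)) (.pi fun j ↦ ?_)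
  apply reflectsDivisibility_quotient
  rw [span_pow_sup_span_pow]
  exact under_map_span_singleton_le (hpow _)

end Powers

section Splitting

variable {S : Type*} [CommRing S] {X : Type*} [AddCommGroup X] [Module S X]

theorem exists_lift_smul_eq_zero_of_baseChange_split {W : Type*} [CommRing W] [Algebra S W]
    {M T : Type*} [AddCommGroup M] [Module S M] [AddCommGroup T] [Module S T]
    {f : M →ₗ[S] X} {g : X →ₗ[S] T} (hfg : Function.Exact f g) (hg : Function.Surjective g)
    (hWinj : Function.Injective (f.baseChange W))
    {σ : W ⊗[S] T →ₗ[W] W ⊗[S] X} (hσ : g.baseChange W ∘ₗ σ = LinearMap.id)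
    {d : S} (hd : ReflectsDivisibility W d M) {y : T} (hy : d • y = 0) :
    ∃ x : X, g x = y ∧ d • x = 0 := by
  obtain ⟨x, rfl⟩ := hg y
  obtain ⟨t, ht⟩ : ∃ t, f t = d • x := (hfg _).1 (by rw [map_smul, hy])
  obtain ⟨u, hu⟩ : ∃ u, f.baseChange W u = 1 ⊗ₜ x - σ (1 ⊗ₜ g x) := by
    refine (lTensor_exact W hfg hg _).1 ?_
    rw [← LinearMap.baseChange_eq_ltensor, map_sub, ← LinearMap.comp_apply _ σ, hσ]
    simp
  have hσd : d • σ (1 ⊗ₜ g x) = 0 := by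
    rw [← LinearMap.map_smul_of_tower, ← TensorProduct.tmul_smul, hy, TensorProduct.tmul_zero,
      map_zero]
  have htu : (1 : W) ⊗ₜ[S] t = d • u := hWinj <| by
    rw [LinearMap.map_smul_of_tower, hu, smul_sub, hσd, sub_zero, LinearMap.baseChange_tmul, ht,
      TensorProduct.tmul_smul]
  obtain ⟨t', rfl⟩ := hd t u htu
  refine ⟨x - f t', ?_, ?_⟩
  · rw [map_sub, hfg.apply_apply_eq_zero, sub_zero]
  · rw [smul_sub, ← map_smul, ht, sub_self]

theorem exists_section_of_forall_lift_single {ι : Type*} [Finite ι] [DecidableEq ι]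
    {I : ι → Ideal S} {g : X →ₗ[S] ∀ i, S ⧸ I i}
    (h : ∀ i, ∃ x, g x = Pi.single i 1 ∧ I i ≤ Ideal.torsionOf S X x) :
    ∃ σ : (∀ i, S ⧸ I i) →ₗ[S] X, g ∘ₗ σ = LinearMap.id := by
  cases nonempty_fintype ι
  choose x hgx hx using h
  let ψ (i : ι) : S ⧸ I i →ₗ[S] X := (I i).liftQ (LinearMap.toSpanSingleton S X (x i)) (hx i)
  have hψ (i : ι) : ψ i 1 = x i := one_smul S (x i)
  refine ⟨LinearMap.lsum S _ S ψ, LinearMap.pi_ext' fun i ↦ ?_⟩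
  refine Submodule.linearMap_qext _ (LinearMap.ext_ring ?_)
  change g (LinearMap.lsum S _ S ψ (Pi.single i 1)) = Pi.single i 1
  rw [LinearMap.lsum_piSingle, hψ, hgx]

end Splitting

theorem ses_split_of_baseChange_split_general
    {S W : Type*} [CommRing S] [CommRing W] [Algebra S W] {q : S}
    (hq : ∀ (n : ℕ) (x : S), algebraMap S W q ^ n ∣ algebraMap S W x → q ^ n ∣ x)
    {ι κ μ : Type*} [Finite ι] {a : ι → ℕ} {b : μ → ℕ}
    {X : Type*} [AddCommGroup X] [Module S X]
    {f : ((κ → S) × (∀ j, S ⧸ Ideal.span {q ^ b j})) →ₗ[S] X}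
    {g : X →ₗ[S] ∀ i, S ⧸ Ideal.span {q ^ a i}}
    (hfg : Function.Exact f g) (hg : Function.Surjective g)
    (hWinj : Function.Injective (f.baseChange W))
    (hWsplit : ∃ σ, g.baseChange W ∘ₗ σ = LinearMap.id) :
    ∃ σ : (∀ i, S ⧸ Ideal.span {q ^ a i}) →ₗ[S] X, g ∘ₗ σ = LinearMap.id := by
  classical
  obtain ⟨τ, hτ⟩ := hWsplit
  refine exists_section_of_forall_lift_single fun i ↦ ?_
  have smul_single_eq_zero :
      q ^ a i • (Pi.single i 1 : ∀ i, S ⧸ Ideal.span {q ^ a i}) = 0 := by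
    rw [← Pi.single_smul, Algebra.smul_def, mul_one, Ideal.Quotient.algebraMap_eq,
      Ideal.Quotient.mk_singleton_self, Pi.single_zero]
  obtain ⟨x, hgx, hx⟩ := exists_lift_smul_eq_zero_of_baseChange_split hfg hg hWinj hτ
    (reflectsDivisibility_pow_free_prod_torsion hq (a i) κ b) smul_single_eq_zero
  exact ⟨x, hgx, (Ideal.span_singleton_le_iff_mem _).2 hx⟩

theorem ses_split_of_baseChange_split
    (W : Type*) [CommRing W] [Algebra 𝕊 W]
    (hreg : (p : W) ∈ nonZeroDivisors W)
    (hinj : ∀ n : ℕ, 1 ≤ n → ∀ x : 𝕊,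
      algebraMap 𝕊 W x ∈ Ideal.span {(p : W) ^ n} → x ∈ Ideal.span {(p : 𝕊) ^ n})
    (r : ℕ) (a : Fin r → ℕ) (ha : ∀ i, 1 ≤ a i)
    (m s : ℕ) (b : Fin s → ℕ) (hb : ∀ j, 1 ≤ b j)
    (X : Type*) [AddCommGroup X] [Module 𝕊 X]
    (f : ((Fin m → 𝕊) × ((j : Fin s) → 𝕊 ⧸ Ideal.span {(p : 𝕊) ^ b j})) →ₗ[𝕊] X)
    (g : X →ₗ[𝕊] ((i : Fin r) → 𝕊 ⧸ Ideal.span {(p : 𝕊) ^ a i}))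
    (hf : Function.Injective f) (hfg : Function.Exact f g) (hg : Function.Surjective g)
    (hWinj : Function.Injective (f.baseChange W))
    (hWexact : Function.Exact (f.baseChange W) (g.baseChange W))
    (hWsurj : Function.Surjective (g.baseChange W))
    (hWsplit : ∃ σ : W ⊗[𝕊] ((i : Fin r) → 𝕊 ⧸ Ideal.span {(p : 𝕊) ^ a i}) →ₗ[W]
        W ⊗[𝕊] X, (g.baseChange W).comp σ = LinearMap.id) :
    ∃ σ : ((i : Fin r) → 𝕊 ⧸ Ideal.span {(p : 𝕊) ^ a i}) →ₗ[𝕊] X,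
      g.comp σ = LinearMap.id := by
  refine ses_split_of_baseChange_split_general (fun n x hx ↦ ?_) hfg hg hWinj hWsplit
  rcases n.eq_zero_or_pos with rfl | hn
  · simp
  · simp only [Ideal.mem_span_singleton] at hinj
    exact hinj n hn x (by simpa using hx)
end

section
/- Let 0 → A →^α B →^β C → 0 be a short exact sequence of 𝔖-modules. Assume that the induced sequence 0 → A_tors → B_tors → C_tors → 0 is split exact, and that the quotient C_tf := C / C_tors is a finite free 𝔖-module. Then β : B → C is split surjective, i.e. there exists an 𝔖-linear map s : C → B with β ∘ s = id_C. -/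
variable {p : ℕ} [Fact p.Prime] {k : Type*} [Field k] [CharP k p] [PerfectField k]

local notation "𝕊" => PowerSeries (WittVector p k)

/-!
Since `C ⧸ C_tors` is projective, `C_tors` has a complement `K` in `C`, and `K ≃ C ⧸ C_tors` is
projective, so its inclusion into `C` lifts through `β`. Together with the given section over
`C_tors`, this lift defines a section of `β` on `C = C_tors ⊕ K`.
-/

section ProjectiveQuotient

variable {R M N P : Type*} [Ring R] [AddCommGroup M] [AddCommGroup N] [AddCommGroup P]
  [Module R M] [Module R N] [Module R P] (Q : Submodule R P) [Module.Projective R (P ⧸ Q)]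

theorem isComplemented_of_projective_quotient : IsComplemented Q := by
  obtain ⟨σ, hσ⟩ : ∃ σ, Q.mkQ ∘ₗ σ = LinearMap.id :=
    Q.mkQ.exists_rightInverse_of_surjective Q.range_mkQ
  have hsplit :=
    (LinearMap.exact_subtype_mkQ Q).split_tfae Q.injective_subtype Q.mkQ_surjective
  obtain ⟨π, hπ⟩ : ∃ π, π ∘ₗ Q.subtype = LinearMap.id := (hsplit.out 0 1 rfl rfl).mp ⟨σ, hσ⟩
  exact ⟨LinearMap.ker π, LinearMap.isCompl_of_proj (LinearMap.congr_fun hπ)⟩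

theorem exists_lift_of_projective_quotient {f : M →ₗ[R] N} (hf : Function.Surjective f)
    (g : P →ₗ[R] N) {t : Q →ₗ[R] M} (ht : f ∘ₗ t = g ∘ₗ Q.subtype) :
    ∃ s : P →ₗ[R] M, f ∘ₗ s = g := by
  obtain ⟨K, hK⟩ := isComplemented_of_projective_quotient Q
  have : Module.Projective R K := .of_equiv (Q.quotientEquivOfIsCompl K hK)
  obtain ⟨u, hu⟩ : ∃ u : K →ₗ[R] M, f ∘ₗ u = g ∘ₗ K.subtype :=
    Module.projective_lifting_property f _ hf
  refine ⟨LinearMap.ofIsCompl hK t u, ?_⟩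
  calc
    f ∘ₗ LinearMap.ofIsCompl hK t u = LinearMap.ofIsCompl hK (f ∘ₗ t) (f ∘ₗ u) :=
      (LinearMap.ofIsCompl_eq hK (by simp) (by simp)).symm
    _ = g := LinearMap.ofIsCompl_eq' hK ht hu

end ProjectiveQuotient

theorem split_surjective_of_torsion_split_general {R B C : Type*} [CommRing R] (r : R)
    [AddCommGroup B] [AddCommGroup C] [Module R B] [Module R C]
    [Module.Projective R (C ⧸ pPowerTorsion R r C)]
    {β : B →ₗ[R] C} (hβ : Function.Surjective β)
    (htsplit : ∃ s : pPowerTorsion R r C →ₗ[R] pPowerTorsion R r B,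
      (mapPTors r β).comp s = LinearMap.id) :
    ∃ s : C →ₗ[R] B, β.comp s = LinearMap.id := by
  obtain ⟨t, ht⟩ := htsplit
  have hlift : β ∘ₗ (pPowerTorsion R r B).subtype ∘ₗ t =
      LinearMap.id ∘ₗ (pPowerTorsion R r C).subtype :=
    congrArg ((pPowerTorsion R r C).subtype ∘ₗ ·) ht
  exact exists_lift_of_projective_quotient _ hβ LinearMap.id hlift

theorem split_surjective_of_torsion_split
    (A B C : Type*) [AddCommGroup A] [AddCommGroup B] [AddCommGroup C]
    [Module 𝕊 A] [Module 𝕊 B] [Module 𝕊 C]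
    (α : A →ₗ[𝕊] B) (β : B →ₗ[𝕊] C)
    (hα : Function.Injective α) (hαβ : Function.Exact α β) (hβ : Function.Surjective β)
    (htinj : Function.Injective (mapPTors (p : 𝕊) α))
    (htexact : Function.Exact (mapPTors (p : 𝕊) α) (mapPTors (p : 𝕊) β))
    (htsurj : Function.Surjective (mapPTors (p : 𝕊) β))
    (htsplit : ∃ s : pPowerTorsion 𝕊 (p : 𝕊) C →ₗ[𝕊] pPowerTorsion 𝕊 (p : 𝕊) B,
      (mapPTors (p : 𝕊) β).comp s = LinearMap.id)
    [Module.Finite 𝕊 (C ⧸ pPowerTorsion 𝕊 (p : 𝕊) C)]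
    [Module.Free 𝕊 (C ⧸ pPowerTorsion 𝕊 (p : 𝕊) C)] :
    ∃ s : C →ₗ[𝕊] B, β.comp s = LinearMap.id :=
  split_surjective_of_torsion_split_general _ hβ htsplit
end

section
/- Let f : M → N be a homomorphism of finitely generated Λ-modules. If for every prime number ℓ ∉ S the induced map of Λ_ℓ-modules f ⊗_Λ Λ_ℓ : M ⊗_Λ Λ_ℓ → N ⊗_Λ Λ_ℓ is the zero map, then f = 0. -/
/-!
Context: `S` a finite set of primes, `R = ℤ[S⁻¹]`, `Λ = R[[t]]`, and for a prime
`ℓ ∉ S`, `Λ_ℓ = ℤ_ℓ[[t]]`, regarded as a `Λ`-algebra via the ring map applying the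
canonical (and unique) ring map `R → ℤ_ℓ` to each coefficient.

STATEMENT 5: if `f : M → N` is a homomorphism of finitely generated `Λ`-modules such
that `f ⊗_Λ Λ_ℓ = 0` for every prime `ℓ ∉ S`, then `f = 0`.
-/

/-- `ℤ[S⁻¹]`: the localization of `ℤ` at the multiplicative set generated by the
primes in `S`. -/
abbrev Rloc (S : Finset ℕ) : Type :=
  Localization (Submonoid.closure ((fun q : ℕ => (q : ℤ)) '' (S : Set ℕ)))


/-! A prime `ℓ` that is not invertible in a localization `R` of `ℤ` satisfies `R / ℓᵏ = ℤ / ℓᵏ`, so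
the reduction `R⟦X⟧ → (ℤ / ℓᵏ)⟦X⟧` modulo `ℓᵏ` factors through `ℤ_[ℓ]⟦X⟧`. Hence an element `n` of
an `R⟦X⟧`-module `N` that dies in `ℤ_[ℓ]⟦X⟧ ⊗ N` lies in `ℓᵏ N` for all `k`. If `R` is not a field,
every maximal ideal `m` of `R⟦X⟧` contains such an `ℓ`, so an element of the image of `f` lies in
`mᵏ N` for all `m` and `k`, and is zero by Krull's intersection theorem. -/

open scoped PowerSeries TensorProduct

section Modules

variable {A N : Type*} [CommRing A] [AddCommGroup N] [Module A N] {n : N}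

theorem eq_zero_of_forall_isMaximal_mem_iInf_pow_smul_top [IsNoetherianRing A] [Module.Finite A N]
    (hn : ∀ m : Ideal A, m.IsMaximal → n ∈ (⨅ k : ℕ, m ^ k • ⊤ : Submodule A N)) : n = 0 := by
  by_contra hn0
  obtain ⟨m, hm, hle⟩ := Ideal.exists_le_maximal (Ideal.torsionOf A N n)
    ((Ideal.torsionOf_eq_top_iff A n).not.mpr hn0)
  obtain ⟨⟨r, hr⟩, hrn : r • n = n⟩ := (Ideal.mem_iInf_smul_pow_eq_bot_iff m n).mp (hn m hm)
  have h_one_sub : 1 - r ∈ m := hle (by simp [Ideal.mem_torsionOf_iff, sub_smul, hrn])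
  exact (Ideal.ne_top_iff_one m).mp hm.ne_top (by simpa using m.add_mem h_one_sub hr)

theorem mem_ker_smul_top_of_one_tmul_eq_zero {B C : Type*} [Semiring B] [Algebra A B] [CommRing C]
    (g : B →+* C) (hg : Function.Surjective (g.comp (algebraMap A B)))
    (hn : (1 : B) ⊗ₜ[A] n = 0) :
    n ∈ (RingHom.ker (g.comp (algebraMap A B)) • ⊤ : Submodule A N) := by
  let _ : Algebra A C := (g.comp (algebraMap A B)).toAlgebra
  let gA : B →ₐ[A] C := { g with commutes' := fun _ ↦ rfl }
  let e : (A ⧸ RingHom.ker (Algebra.ofId A C)) ≃ₐ[A] C :=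
    Ideal.quotientKerAlgEquivOfSurjective hg
  have h_quot : (1 : A ⧸ RingHom.ker (Algebra.ofId A C)) ⊗ₜ[A] n = 0 := by
    simpa using congrArg ((e.symm.toAlgHom.comp gA).toLinearMap.rTensor N) hn
  have h_mk := congrArg (TensorProduct.quotTensorEquivQuotSMul N _) h_quot
  rwa [← map_one (Ideal.Quotient.mk _), TensorProduct.quotTensorEquivQuotSMul_mk_tmul, map_zero,
    one_smul, Submodule.Quotient.mk_eq_zero] at h_mk

end Modules

section PowerSeries

theorem powerSeries_C_dvd_iff_forall_dvd_coeff {R : Type*} [CommSemiring R] {a : R} {p : R⟦X⟧} :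
    PowerSeries.C a ∣ p ↔ ∀ i, a ∣ PowerSeries.coeff i p := by
  refine ⟨?_, fun h ↦ ?_⟩
  · rintro ⟨q, rfl⟩ i
    simp
  · choose c hc using h
    exact ⟨PowerSeries.mk c, PowerSeries.ext fun i ↦ by simp [hc]⟩

variable {R : Type*} [CommRing R]

theorem ker_powerSeries_map_eq_span_C {A : Type*} [Semiring A] {ψ : R →+* A} {a : R}
    (hψ : RingHom.ker ψ = Ideal.span {a}) :
    RingHom.ker (PowerSeries.map ψ) = Ideal.span {PowerSeries.C a} := by
  ext p
  simp_rw [Ideal.mem_span_singleton, powerSeries_C_dvd_iff_forall_dvd_coeff,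
    ← Ideal.mem_span_singleton, ← hψ, RingHom.mem_ker, PowerSeries.ext_iff,
    PowerSeries.coeff_map, map_zero]

theorem powerSeries_X_mem_of_isMaximal (m : Ideal R⟦X⟧) [hm : m.IsMaximal] :
    PowerSeries.X ∈ m := by
  have h_jac : (PowerSeries.X : R⟦X⟧) ∈ Ideal.jacobson ⊥ :=
    Ideal.mem_jacobson_bot.mpr fun y ↦ by simp [PowerSeries.isUnit_iff_constantCoeff]
  exact Ideal.mem_sInf.mp h_jac ⟨bot_le, hm⟩

theorem isMaximal_comap_powerSeries_C (m : Ideal R⟦X⟧) [m.IsMaximal] :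
    (m.comap PowerSeries.C).IsMaximal := by
  have hX := powerSeries_X_mem_of_isMaximal m
  have h_ker : RingHom.ker PowerSeries.constantCoeff ≤ m := fun p hp ↦
    m.mem_of_dvd (PowerSeries.X_dvd_iff.mpr hp) hX
  have h_map : m.map PowerSeries.constantCoeff = m.comap PowerSeries.C := by
    refine le_antisymm ?_ fun a (ha : PowerSeries.C a ∈ m) ↦ by
      simpa using Ideal.mem_map_of_mem PowerSeries.constantCoeff ha
    rw [← Ideal.map_le_iff_le_comap, Ideal.map_map]
    exact PowerSeries.map_constantCoeff_le_self_of_X_mem hX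
  exact h_map ▸ Ideal.IsMaximal.map_of_surjective_of_ker_le PowerSeries.constantCoeff_surj h_ker

end PowerSeries

theorem not_isField_of_prime_of_forall_not_dvd {A R : Type*} [CommRing A] [IsDomain A] [CommRing R]
    [Algebra A R] {T : Submonoid A} [IsLocalization T R] {p : A} (hp : Prime p)
    (hT : ∀ t ∈ T, ¬ p ∣ t) : ¬ IsField R := by
  intro hR
  have hT0 : T ≤ nonZeroDivisors A := le_nonZeroDivisors_of_noZeroDivisors fun h0 ↦
    hT 0 h0 (dvd_zero p)
  have hp0 : algebraMap A R p ≠ 0 :=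
    (map_ne_zero_iff _ (IsLocalization.injective R hT0)).mpr hp.ne_zero
  let _ := hR.toField
  obtain ⟨t, ht, hpt⟩ := (IsLocalization.algebraMap_isUnit_iff T).mp hp0.isUnit
  exact hT t ht hpt

section IntLocalization

variable {R : Type*} [CommRing R] [Algebra ℤ R]

theorem exists_prime_natCast_mem_of_isMaximal (T : Submonoid ℤ) [IsLocalization T R]
    (hR : ¬ IsField R) (m : Ideal R) [hm : m.IsMaximal] :
    ∃ p : ℕ, p.Prime ∧ (p : R) ∈ m := by
  have : Nontrivial R := ⟨0, 1, fun h01 ↦ hm.ne_top (m.eq_top_iff_one.mpr (h01 ▸ m.zero_mem))⟩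
  rcases Ideal.isPrime_int_iff.mp (m.comap_isPrime (algebraMap ℤ R)) with h_bot | ⟨p, hp, h_span⟩
  · refine absurd ?_ (Ring.ne_bot_of_isMaximal_of_not_isField hm hR)
    rw [← IsLocalization.map_under T R m, Ideal.under_def, h_bot, Ideal.map_bot]
  · have h_mem : (p : ℤ) ∈ m.comap (algebraMap ℤ R) := h_span ▸ Ideal.mem_span_singleton_self _
    exact ⟨p, hp, by simpa using h_mem⟩

theorem exists_ringHom_padicInt_of_not_isUnit (T : Submonoid ℤ) [IsLocalization T R] {p : ℕ}
    [Fact p.Prime] (hp : ¬ IsUnit (p : R)) : Nonempty (R →+* ℤ_[p]) := by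
  have h_isUnit : ∀ t : T, IsUnit (Int.castRingHom ℤ_[p] t) := fun t ↦ by
    by_contra h_nonunit
    rw [eq_intCast, PadicInt.not_isUnit_iff, PadicInt.norm_int_lt_one_iff_dvd] at h_nonunit
    refine hp ?_
    simpa using (IsLocalization.algebraMap_isUnit_iff (S := R) T).mpr ⟨t, t.2, h_nonunit⟩
  exact ⟨IsLocalization.lift h_isUnit⟩

theorem ker_ringHom_zmod_eq_span_natCast (T : Submonoid ℤ) [IsLocalization T R] {n : ℕ}
    (ψ : R →+* ZMod n) : RingHom.ker ψ = Ideal.span {(n : R)} := by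
  refine le_antisymm (fun x hx ↦ ?_) ?_
  · obtain ⟨⟨a, t⟩, hat : x * algebraMap ℤ R t = algebraMap ℤ R a⟩ := IsLocalization.surj T x
    have ha : (a : ZMod n) = 0 := by
      simpa [RingHom.mem_ker.mp hx] using (congrArg ψ hat).symm
    have h_dvd : (n : R) ∣ algebraMap ℤ R a := by
      simpa using map_dvd (algebraMap ℤ R) ((ZMod.intCast_zmod_eq_zero_iff_dvd a n).mp ha)
    rw [Ideal.mem_span_singleton]
    exact (IsLocalization.map_units R t).dvd_mul_right.mp (hat ▸ h_dvd)
  · simp [RingHom.mem_ker]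

theorem mem_pow_smul_top_of_one_tmul_padicInt_eq_zero (T : Submonoid ℤ) [IsLocalization T R]
    {p : ℕ} [Fact p.Prime] {N : Type*} [AddCommGroup N] [Module R⟦X⟧ N]
    [Algebra R⟦X⟧ ℤ_[p]⟦X⟧] {φ : R →+* ℤ_[p]}
    (hφ : algebraMap R⟦X⟧ ℤ_[p]⟦X⟧ = PowerSeries.map φ) {n : N}
    (hn : (1 : ℤ_[p]⟦X⟧) ⊗ₜ[R⟦X⟧] n = 0) (k : ℕ) :
    n ∈ (Ideal.span {(p : R⟦X⟧)} ^ k • ⊤ : Submodule R⟦X⟧ N) := by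
  let ψ : R →+* ZMod (p ^ k) := (PadicInt.toZModPow k).comp φ
  have h_comp : (PowerSeries.map (PadicInt.toZModPow k)).comp (algebraMap R⟦X⟧ ℤ_[p]⟦X⟧) =
      PowerSeries.map ψ := by
    rw [hφ, PowerSeries.map_comp]
  have h_surj : Function.Surjective (PowerSeries.map ψ) :=
    PowerSeries.map_surjective _ (ZMod.ringHom_surjective ψ)
  have h_ker : RingHom.ker (PowerSeries.map ψ) = Ideal.span {(p : R⟦X⟧)} ^ k := by
    rw [ker_powerSeries_map_eq_span_C (ker_ringHom_zmod_eq_span_natCast T ψ),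
      Ideal.span_singleton_pow]
    simp
  rw [← h_ker, ← h_comp]
  exact mem_ker_smul_top_of_one_tmul_eq_zero _ (h_comp ▸ h_surj) hn

theorem map_eq_zero_of_padic_baseChange_eq_zero_general (T : Submonoid ℤ) [IsLocalization T R]
    (hR : ¬ IsField R) {M N : Type*} [AddCommGroup M] [AddCommGroup N] [Module R⟦X⟧ M]
    [Module R⟦X⟧ N] [Module.Finite R⟦X⟧ N] (f : M →ₗ[R⟦X⟧] N)
    (h : ∀ (p : ℕ) [Fact p.Prime], ¬ IsUnit (p : R) → ∀ [Algebra R⟦X⟧ ℤ_[p]⟦X⟧],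
      (∃ φ : R →+* ℤ_[p], algebraMap R⟦X⟧ ℤ_[p]⟦X⟧ = PowerSeries.map φ) →
        f.baseChange ℤ_[p]⟦X⟧ = 0) :
    f = 0 := by
  have : IsNoetherianRing R := IsLocalization.isNoetherianRing T R inferInstance
  ext x
  refine eq_zero_of_forall_isMaximal_mem_iInf_pow_smul_top (A := R⟦X⟧) fun m hm ↦
    (Submodule.mem_iInf _).mpr fun k ↦ ?_
  have hmC : (m.comap PowerSeries.C).IsMaximal := isMaximal_comap_powerSeries_C m
  obtain ⟨p, hp, hpm⟩ := exists_prime_natCast_mem_of_isMaximal T hR (m.comap PowerSeries.C)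
  have : Fact p.Prime := ⟨hp⟩
  have hp_nonunit : ¬ IsUnit (p : R) := fun hu ↦ hmC.ne_top (Ideal.eq_top_of_isUnit_mem _ hpm hu)
  obtain ⟨φ⟩ := exists_ringHom_padicInt_of_not_isUnit T hp_nonunit
  let _ : Algebra R⟦X⟧ ℤ_[p]⟦X⟧ := (PowerSeries.map φ).toAlgebra
  have h_tmul : (1 : ℤ_[p]⟦X⟧) ⊗ₜ[R⟦X⟧] f x = 0 := by
    rw [← LinearMap.baseChange_tmul, h p hp_nonunit ⟨φ, rfl⟩, LinearMap.zero_apply]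
  have h_le : Ideal.span {(p : R⟦X⟧)} ^ k ≤ m ^ k :=
    Ideal.pow_right_mono ((Ideal.span_singleton_le_iff_mem m).mpr (by simpa using hpm)) k
  exact Submodule.smul_mono_left h_le
    (mem_pow_smul_top_of_one_tmul_padicInt_eq_zero T rfl h_tmul k)

end IntLocalization

/-- The submonoid of `ℤ` generated by `S`, whose elements `Rloc S` inverts. -/
abbrev rlocSubmonoid (S : Finset ℕ) : Submonoid ℤ :=
  Submonoid.closure ((fun q : ℕ => (q : ℤ)) '' (S : Set ℕ))

theorem not_isField_rloc {S : Finset ℕ} (hS : ∀ q ∈ S, q.Prime) : ¬ IsField (Rloc S) := by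
  obtain ⟨p, hp, hpS⟩ := Nat.infinite_setOfPred_prime.exists_notMem_finset S
  have hpZ : Prime (p : ℤ) := Nat.prime_iff_prime_int.mp hp
  refine not_isField_of_prime_of_forall_not_dvd (T := rlocSubmonoid S) hpZ fun t ht hpt ↦ ?_
  obtain ⟨s, hs, rfl⟩ := Submonoid.exists_multiset_of_mem_closure ht
  obtain ⟨_, hqs, hpq⟩ := hpZ.exists_mem_multiset_dvd hpt
  obtain ⟨q, hqS, rfl⟩ := hs _ hqs
  exact hpS ((Nat.prime_dvd_prime_iff_eq hp (hS q hqS)).mp (Int.natCast_dvd_natCast.mp hpq) ▸ hqS)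

theorem isUnit_natCast_rloc {S : Finset ℕ} {q : ℕ} (hq : q ∈ S) : IsUnit (q : Rloc S) := by
  simpa using IsLocalization.map_units (Rloc S)
    (⟨q, Submonoid.subset_closure ⟨q, hq, rfl⟩⟩ : rlocSubmonoid S)

theorem map_eq_zero_of_padic_baseChange_eq_zero
    (S : Finset ℕ) (hS : ∀ q ∈ S, Nat.Prime q)
    (M N : Type*) [AddCommGroup M] [AddCommGroup N]
    [Module (PowerSeries (Rloc S)) M] [Module (PowerSeries (Rloc S)) N]
    [Module.Finite (PowerSeries (Rloc S)) M] [Module.Finite (PowerSeries (Rloc S)) N]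
    (f : M →ₗ[PowerSeries (Rloc S)] N)
    (h : ∀ (ℓ : ℕ) [Fact ℓ.Prime], ℓ ∉ S →
      ∀ [Algebra (PowerSeries (Rloc S)) (PowerSeries ℤ_[ℓ])],
        (∃ φ : Rloc S →+* ℤ_[ℓ],
            algebraMap (PowerSeries (Rloc S)) (PowerSeries ℤ_[ℓ]) = PowerSeries.map φ) →
        f.baseChange (PowerSeries ℤ_[ℓ]) = 0) :
    f = 0 :=
  map_eq_zero_of_padic_baseChange_eq_zero_general (rlocSubmonoid S) (not_isField_rloc hS) f
    fun ℓ _ hℓ ↦ h ℓ fun hℓS ↦ hℓ (isUnit_natCast_rloc hℓS)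
end
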